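/- arXiv:2205.07498 — 2 statements merged into one kernel-verified Lean document; each statement's English description precedes it below -/
import Mathlib

section
/- For every integer c ≥ 3, every c-critical graph G not isomorphic to K_c has average degree at least c − 1 + (c − 3)/(c² − 3); that is, 2|E(G)| ≥ (c − 1 + (c − 3)/(c² − 3)) · |V(G)|. -/
/-!
Write `k = c - 1`. Every vertex of a `c`-critical graph has degree at least `k`; call the vertices
of degree exactly `k` *low*, and let `T` be the graph induced on them (`lowGraph`). The proof bounds
the number of edges of `T` and then counts the edges between low and high vertices.

**Structure of `T`.** Let `Q` be a nonempty vertex set and orient the edges inside `Q`, each in at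
least one direction. If every induced subdigraph has a kernel and every vertex of `Q` has fewer than
`k` neighbours that are outside `Q` or are out-neighbours, then a `k`-colouring of `G - Q` extends
to `G`: Galvin's argument colours `Q` from the remaining lists. Apply this to an even cycle of `T`
whose even positions are independent, every edge being oriented both ways except that the arcs from
each vertex to its successor are deleted. Kernels exist (`exists_kernel`) because each part of the
even/odd bipartition is either independent or completely bidirected, and each out-degree has dropped
below the degree `k`. Hence in every even cycle of `T` two vertices at even positions are adjacent;
this is the property `AltEven` (`CCritical.altEven`).

`AltEven` forces every cycle of `T` to span a clique or to be odd and chordless (`AltEven.good`), by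
induction on the length: a chord splits the cycle into two shorter good cycles. This is Gallai's
theorem that the blocks of `T` are complete graphs and odd cycles.

**Edges of `T`.** Blocks are not constructed. Instead, `AltEven.exists_block` finds inside any
vertex set containing an edge a clique or a long chordless odd cycle that admits no ear. Splitting
off such a set gives by induction `AltEven.sum_weight_le`: a nonnegative edge weight whose total on
each clique and each long odd cycle `B` is at most `|B| - 1` has total at most `|U| - 1` on every
nonempty `U`. As `G` is not `K_c`, cliques of `T` have at most `k` vertices. With `β = k - 1 + 2/k`,
give weight `2/k` to the edges inside a `k`-clique, `1` to the edges leaving a `k`-clique, and `2/β`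
to all others. Summing this bound over all low vertices, and once more over those in no `k`-clique,
yields `AltEven.sum_adj_le`: the average degree of `T` is at most `β`.

**Count.** Low vertices therefore send at least `(1 - 2/k)|L|` edges to the high vertices, whose
degrees are at least `k + 1`; the two lower bounds on the degree sum of the high vertices combine to
the theorem (`gallai_arith`).
-/

open scoped Classical


/-- `G` is `c`-critical: its chromatic number is `c` and every proper subgraph is
`(c − 1)`-colorable. -/
def CCritical {V : Type} [Fintype V] (c : ℕ) (G : SimpleGraph V) : Prop :=
  G.chromaticNumber = c ∧ ∀ H : G.Subgraph, H ≠ ⊤ → H.coe.Colorable (c - 1)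

/-! ### Gallai's dichotomy for cycles -/

section Cycles

/-- The vertices `f 0, …, f (n - 1)`, in this order, form a cycle of length `n` in `T`. The values
of `f` from `n` on are irrelevant. -/
structure IsCyc {V : Type} (T : SimpleGraph V) (n : ℕ) (f : ℕ → V) : Prop where
  three_le : 3 ≤ n
  inj : ∀ i j, i < n → j < n → f i = f j → i = j
  adj : ∀ i, i + 1 < n → T.Adj (f i) (f (i + 1))
  close : T.Adj (f (n - 1)) (f 0)

/-- In every even cycle of `T`, two vertices at even positions are adjacent. By rotation the same
holds for the odd positions. -/
def AltEven {V : Type} (T : SimpleGraph V) : Prop :=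
  ∀ n f, IsCyc T n f → Even n → ∃ i j, i < j ∧ j < n ∧ Even i ∧ Even j ∧ T.Adj (f i) (f j)

/-- The sequence `f 0, …, f (n - 1)` rotated cyclically so as to start at `f r`, for `r < n`. -/
def rot {V : Type} (n r : ℕ) (f : ℕ → V) : ℕ → V :=
  fun i => if i + r < n then f (i + r) else f (i + r - n)

/-- The only edges of `T` among `f 0, …, f (n - 1)` join cyclically consecutive positions. -/
def Chordless {V : Type} (T : SimpleGraph V) (n : ℕ) (f : ℕ → V) : Prop :=
  ∀ i j, i < j → j < n → T.Adj (f i) (f j) → j = i + 1 ∨ (i = 0 ∧ j = n - 1)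

/-- The vertices `f 0, …, f (n - 1)` are pairwise adjacent. -/
def CliqueOn {V : Type} (T : SimpleGraph V) (n : ℕ) (f : ℕ → V) : Prop :=
  ∀ i j, i < j → j < n → T.Adj (f i) (f j)

/-- The vertices of the cycle span a complete graph, or the cycle is odd and chordless. Triangles
satisfy both alternatives. -/
def GoodCyc {V : Type} (T : SimpleGraph V) (n : ℕ) (f : ℕ → V) : Prop :=
  CliqueOn T n f ∨ (Odd n ∧ Chordless T n f)

variable {V : Type} {T : SimpleGraph V} {n : ℕ} {f : ℕ → V}

theorem IsCyc.rot (h : IsCyc T n f) {r : ℕ} (hr : r < n) : IsCyc T n (rot n r f) := by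
  obtain ⟨h3, hi, ha, hc⟩ := h
  refine ⟨h3, ?_, ?_, ?_⟩
  · intro i j hin hjn hij
    unfold _root_.rot at hij
    split_ifs at hij with h1 h2 h2
    · have := hi _ _ h1 h2 hij; omega
    · have := hi _ _ h1 (by omega) hij; omega
    · have := hi _ _ (by omega) h2 hij; omega
    · have := hi _ _ (by omega) (by omega) hij; omega
  · intro i hin
    unfold _root_.rot
    split_ifs with h1 h2 h2
    · have := ha (i + r) (by omega)
      rwa [show i + 1 + r = i + r + 1 by omega]
    · rw [show i + r = n - 1 by omega, show i + 1 + r - n = 0 by omega]; exact hc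
    · omega
    · have := ha (i + r - n) (by omega)
      rwa [show i + 1 + r - n = i + r - n + 1 by omega]
  · unfold _root_.rot
    rcases Nat.eq_zero_or_pos r with rfl | h0
    · simpa [show n - 1 < n by omega, show 0 < n by omega] using hc
    · rw [if_neg (by omega), if_pos (by omega), Nat.zero_add]
      have := ha (n - 1 + r - n) (by omega)
      rwa [show n - 1 + r - n + 1 = r by omega] at this

/-- The chord `f 0`–`f j` closes an initial segment of the cycle to a shorter cycle. -/
theorem IsCyc.take (h : IsCyc T n f) {j : ℕ} (h2 : 2 ≤ j) (hj : j < n) (hadj : T.Adj (f 0) (f j)) :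
    IsCyc T (j + 1) f :=
  ⟨by omega, fun a b ha hb => h.inj a b (by omega) (by omega), fun a ha => h.adj a (by omega),
    by simpa using hadj.symm⟩

theorem CliqueOn.of_rot {r : ℕ} (hr : r < n) (h : CliqueOn T n (rot n r f)) : CliqueOn T n f := by
  have key : ∀ i, i < n → ∃ i', i' < n ∧ rot n r f i' = f i ∧ (r ≤ i → i' = i - r) ∧
      (i < r → i' = i + n - r) := by
    intro i hi
    by_cases hir : r ≤ i
    · exact ⟨i - r, by omega, by unfold rot; rw [if_pos (by omega)]; congr 1; omega,
        fun _ => rfl, by omega⟩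
    · exact ⟨i + n - r, by omega, by unfold rot; rw [if_neg (by omega)]; congr 1; omega,
        by omega, fun _ => rfl⟩
  intro i j hij hj
  obtain ⟨a, ha, hfa, ha1, ha2⟩ := key i (by omega)
  obtain ⟨b, hb, hfb, hb1, hb2⟩ := key j hj
  rw [← hfa, ← hfb]
  have hab : a ≠ b := by omega
  rcases lt_or_gt_of_ne hab with hlt | hlt
  · exact h _ _ hlt hb
  · exact (h _ _ hlt ha).symm

/-- The case `n = 4`: both diagonals of a 4-cycle are edges. -/
theorem AltEven.four (hT : AltEven T) {x u y v : V} (hxy : x ≠ y) (huv : u ≠ v)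
    (h1 : T.Adj x u) (h2 : T.Adj u y) (h3 : T.Adj y v) (h4 : T.Adj v x) : T.Adj x y := by
  let g : ℕ → V := fun i => if i = 0 then x else if i = 1 then u else if i = 2 then y else v
  have hg : IsCyc T 4 g := by
    refine ⟨by norm_num, ?_, ?_, ?_⟩
    · have := h1.ne; have := h2.ne; have := h3.ne; have := h4.ne
      intro i j hi hj hij
      interval_cases i <;> interval_cases j <;> simp [g] at hij ⊢ <;> simp_all
    · intro i hi
      have : i < 3 := by omega
      interval_cases i <;> simp [g] <;> assumption
    · simpa [g] using h4
  obtain ⟨i, j, hij, hj, hie, hje, hadj⟩ := hT 4 g hg (by decide)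
  rw [Nat.even_iff] at hie hje
  obtain rfl : i = 0 := by omega
  obtain rfl : j = 2 := by omega
  simpa [g] using hadj

/-- No vertex outside a chordless odd cycle of length at least 5 is adjacent to two consecutive
vertices of it. If `x` has no third neighbour on the cycle, inserting `x` gives an even cycle with
an independent class of alternate vertices. A third neighbour `f j` next to `f 0` or `f (n - 1)` is
excluded by `AltEven.four`, and any other one makes `f (n - 1), f 0, …, f j, x` such a cycle. Only
the goodness of cycles shorter than `n` is used, so that the lemma applies inside the induction
proving `AltEven.good`. -/
theorem AltEven.no_apex (hT : AltEven T) (hC : IsCyc T n f) (h5 : 5 ≤ n) (hodd : Odd n)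
    (hch : Chordless T n f) (hgood : ∀ m g, m < n → IsCyc T m g → GoodCyc T m g)
    {x : V} (hx : ∀ i, i < n → f i ≠ x) (h0 : T.Adj x (f 0)) (h1 : T.Adj x (f (n - 1))) :
    False := by
  by_cases hex : ∃ j, 0 < j ∧ j < n - 1 ∧ T.Adj x (f j)
  · obtain ⟨j, hj0, hjn, hj⟩ := hex
    by_cases hj1 : j = 1
    · subst hj1
      have := hT.four (x := f 1) (u := f 0) (y := f (n - 1)) (v := x)
        (fun h => by have := hC.inj _ _ (by omega) (by omega) h; omega) (hx 0 (by omega))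
        (hC.adj 0 (by omega)).symm hC.close.symm h1.symm hj
      rcases hch _ _ (by omega) (by omega) this with h | h <;> omega
    by_cases hj2 : j = n - 2
    · subst hj2
      have e := hC.adj (n - 2) (by omega)
      rw [show n - 2 + 1 = n - 1 by omega] at e
      have := hT.four (x := f (n - 2)) (u := f (n - 1)) (y := f 0) (v := x)
        (fun h => by have := hC.inj _ _ (by omega) (by omega) h; omega) (hx _ (by omega))
        e hC.close h0.symm hj
      rcases hch _ _ (by omega) (by omega) this.symm with h | h <;> omega
    -- the cycle `x, f 0, …, f j` is odd, so `j` is odd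
    have hjodd : Odd j := by
      let g : ℕ → V := fun i => if i ≤ j then f i else x
      have hg : IsCyc T (j + 2) g := by
        refine ⟨by omega, ?_, ?_, ?_⟩
        · intro a b ha hb hab
          simp only [g] at hab
          split_ifs at hab with c1 c2 c2
          · exact hC.inj _ _ (by omega) (by omega) hab
          · exact absurd hab (hx _ (by omega))
          · exact absurd hab.symm (hx _ (by omega))
          · omega
        · intro a ha
          simp only [g]
          rw [if_pos (by omega)]
          split_ifs with c
          · exact hC.adj _ (by omega)
          · rw [show a = j by omega]; exact hj.symm
        · simpa [g] using h0
      rcases hgood _ g (by omega) hg with hq | ⟨ho, -⟩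
      · have := hq 0 2 (by omega) (by omega)
        simp only [g] at this
        rw [if_pos (by omega), if_pos (by omega)] at this
        rcases hch _ _ (by omega) (by omega) this with h | h <;> omega
      · rw [Nat.odd_iff] at ho ⊢; omega
    -- the even cycle `f (n - 1), f 0, …, f j, x`, whose even positions avoid `x`
    let g : ℕ → V := fun i => if i = 0 then f (n - 1) else if i ≤ j + 1 then f (i - 1) else x
    have hg : IsCyc T (j + 3) g := by
      refine ⟨by omega, ?_, ?_, ?_⟩
      · intro a b ha hb hab
        simp only [g] at hab
        split_ifs at hab with c1 c2 c3 c4 c5 c6 c7 c8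
        · omega
        · have := hC.inj _ _ (by omega) (by omega) hab; omega
        · exact absurd hab (hx _ (by omega))
        · have := hC.inj _ _ (by omega) (by omega) hab; omega
        · have := hC.inj _ _ (by omega) (by omega) hab; omega
        · exact absurd hab (hx _ (by omega))
        · exact absurd hab.symm (hx _ (by omega))
        · exact absurd hab.symm (hx _ (by omega))
        · omega
      · intro a ha
        simp only [g]
        rw [if_neg (show a + 1 ≠ 0 by omega)]
        split_ifs with c1 c2 c3 c4
        · subst c1; simpa using hC.close
        · omega
        · have := hC.adj (a - 1) (by omega)
          rwa [show a - 1 + 1 = a + 1 - 1 by omega] at this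
        · rw [show a - 1 = j by omega]; exact hj.symm
        · omega
        · omega
      · simpa [g] using h1
    obtain ⟨a, b, hab, hb, hae, hbe, hadj⟩ := hT _ g hg (by
      rw [Nat.odd_iff] at hjodd; rw [Nat.even_iff]; omega)
    rw [Nat.odd_iff] at hjodd; rw [Nat.even_iff] at hae hbe
    simp only [g] at hadj
    rw [if_neg (show b ≠ 0 by omega), if_pos (show b ≤ j + 1 by omega)] at hadj
    split_ifs at hadj with c1 c2
    · rcases hch _ _ (by omega) (by omega) hadj.symm with h | h <;> omega
    · rcases hch _ _ (by omega) (by omega) hadj with h | h <;> omega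
    · omega
  · -- the even cycle `x, f 0, …, f (n - 1)`
    let g : ℕ → V := fun i => if i = 0 then x else f (i - 1)
    have hg : IsCyc T (n + 1) g := by
      refine ⟨by omega, ?_, ?_, ?_⟩
      · intro a b ha hb hab
        simp only [g] at hab
        split_ifs at hab with c1 c2 c3
        · omega
        · exact absurd hab.symm (hx _ (by omega))
        · exact absurd hab (hx _ (by omega))
        · have := hC.inj _ _ (by omega) (by omega) hab; omega
      · intro a ha
        simp only [g]
        rw [if_neg (show a + 1 ≠ 0 by omega)]
        split_ifs with c1
        · subst c1; simpa using h0
        · have := hC.adj (a - 1) (by omega)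
          rwa [show a - 1 + 1 = a + 1 - 1 by omega] at this
      · simp only [g]
        rw [if_neg (by omega)]
        simpa using h1.symm
    obtain ⟨a, b, hab, hb, hae, hbe, hadj⟩ := hT _ g hg (by
      rw [Nat.odd_iff] at hodd; rw [Nat.even_iff]; omega)
    rw [Nat.odd_iff] at hodd; rw [Nat.even_iff] at hae hbe
    simp only [g] at hadj
    rw [if_neg (show b ≠ 0 by omega)] at hadj
    split_ifs at hadj with c1
    · exact hex ⟨b - 1, by omega, by omega, hadj⟩
    · rcases hch _ _ (by omega) (by omega) hadj with h | h <;> omega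

/-- A cycle with a chord spans a clique, provided all shorter cycles are good. The chord splits the
cycle into two good cycles. If both are cliques, `AltEven.four` supplies the remaining edges; if
exactly one is, `AltEven.no_apex` applies to the other. If neither is, both are odd, so the cycle is
even and two vertices at odd positions are adjacent; this second chord crosses the first one and
produces a bad even cycle or a 4-cycle without diagonal. -/
theorem AltEven.clique_of_chord (hT : AltEven T) (hC : IsCyc T n f)
    (hgood : ∀ m g, m < n → IsCyc T m g → GoodCyc T m g)
    {j : ℕ} (hj2 : 2 ≤ j) (hjn : j + 2 ≤ n) (hadj : T.Adj (f 0) (f j)) : CliqueOn T n f := by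
  have hC1 : IsCyc T (j + 1) f := hC.take hj2 (by omega) hadj
  have hR : IsCyc T n (rot n j f) := hC.rot (by omega)
  have hR0 : rot n j f 0 = f j := by unfold rot; rw [if_pos (by omega)]; simp
  have hRl : rot n j f (n - j) = f 0 := by
    unfold rot; rw [if_neg (by omega)]; congr 1; omega
  have hRi : ∀ i, i < n - j → rot n j f i = f (i + j) := fun i hi => by
    unfold rot; rw [if_pos (by omega)]
  have hC2 : IsCyc T (n - j + 1) (rot n j f) :=
    hR.take (by omega) (by omega) (by rw [hR0, hRl]; exact hadj.symm)
  have hd : ∀ {a b}, a < n → b < n → a ≠ b → f a ≠ f b := fun ha hb hab h =>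
    hab (hC.inj _ _ ha hb h)
  have g1 := hgood _ _ (by omega) hC1
  have g2 := hgood _ _ (by omega) hC2
  -- a triangle is both complete and chordless
  have nc : ∀ {m g}, Odd m → IsCyc T m g → ¬ CliqueOn T m g → 5 ≤ m := by
    intro m g hm hg hq
    by_contra hlt
    have h3 := hg.three_le
    have : m = 3 := by rw [Nat.odd_iff] at hm; omega
    subst this
    apply hq
    intro a b hab hb
    have e0 := hg.adj 0 (by omega)
    have e1 := hg.adj 1 (by omega)
    have e2 := hg.close.symm
    interval_cases b <;> interval_cases a <;> assumption
  by_cases q1 : CliqueOn T (j + 1) f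
  · by_cases q2 : CliqueOn T (n - j + 1) (rot n j f)
    · -- both cliques
      have hj0 : ∀ b, j < b → b < n → T.Adj (f j) (f b) := fun b h1 h2 => by
        have := q2 0 (b - j) (by omega) (by omega)
        rwa [hR0, hRi _ (by omega), show b - j + j = b by omega] at this
      have h00 : ∀ b, j < b → b < n → T.Adj (f 0) (f b) := fun b h1 h2 => by
        have := q2 (b - j) (n - j) (by omega) (by omega)
        rw [hRl, hRi _ (by omega), show b - j + j = b by omega] at this
        exact this.symm
      intro a b hab hb
      by_cases hbj : b ≤ j
      · exact q1 a b hab (by omega)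
      by_cases haj : j < a
      · have := q2 (a - j) (b - j) (by omega) (by omega)
        rwa [hRi _ (by omega), hRi _ (by omega), show b - j + j = b by omega,
          show a - j + j = a by omega] at this
      by_cases ha0 : a = 0
      · subst ha0; exact h00 b (by omega) hb
      by_cases haj' : a = j
      · subst haj'; exact hj0 b (by omega) hb
      exact hT.four (u := f 0) (v := f j) (hd (by omega) hb (by omega))
        (hd (by omega) (by omega) (by omega)) (q1 0 a (by omega) (by omega)).symm
        (h00 b (by omega) hb) (hj0 b (by omega) hb).symm (q1 a j (by omega) (by omega)).symm
    · exfalso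
      obtain ⟨ho, hch⟩ := g2.resolve_left q2
      refine hT.no_apex hC2 (nc ho hC2 q2) ho hch (fun m g hm => hgood m g (by omega))
        (x := f 1) ?_ ?_ ?_
      · intro i hi
        by_cases hi' : i = n - j
        · subst hi'; rw [hRl]; exact hd (by omega) (by omega) (by omega)
        · rw [hRi _ (by omega)]; exact hd (by omega) (by omega) (by omega)
      · rw [hR0]; exact q1 1 j (by omega) (by omega)
      · simpa [hRl] using (q1 0 1 (by omega) (by omega)).symm
  · exfalso
    obtain ⟨ho1, hch1⟩ := g1.resolve_left q1
    have h51 := nc ho1 hC1 q1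
    by_cases q2 : CliqueOn T (n - j + 1) (rot n j f)
    · refine hT.no_apex hC1 h51 ho1 hch1 (fun m g hm => hgood m g (by omega))
        (x := f (j + 1)) ?_ ?_ ?_
      · intro i hi
        exact hd (by omega) (by omega) (by omega)
      · have := q2 1 (n - j) (by omega) (by omega)
        rwa [hRl, hRi _ (by omega), Nat.add_comm] at this
      · have := q2 0 1 (by omega) (by omega)
        rw [hR0, hRi _ (by omega), Nat.add_comm] at this
        simpa using this.symm
    · obtain ⟨ho2, hch2⟩ := g2.resolve_left q2
      have h52 := nc ho2 hC2 q2
      rw [Nat.odd_iff] at ho1 ho2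
      -- chordlessness of the second cycle in terms of `f`
      have hch2a : ∀ a b, j ≤ a → a < b → b < n → T.Adj (f a) (f b) → b = a + 1 := by
        intro a b h1 h2 h3 h
        have := hch2 (a - j) (b - j) (by omega) (by omega) (by
          rwa [hRi _ (by omega), hRi _ (by omega), show b - j + j = b by omega,
            show a - j + j = a by omega])
        omega
      have hch2b : ∀ a, j < a → a < n → T.Adj (f 0) (f a) → a = n - 1 := by
        intro a h1 h2 h
        have := hch2 (a - j) (n - j) (by omega) (by omega) (by
          rw [hRl, hRi _ (by omega), show a - j + j = a by omega]; exact h.symm)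
        omega
      -- rotating by one moves the end `f 0` of the chord out of the class of even positions
      obtain ⟨a, b, hab, hb, hae, hbe, hadj'⟩ := hT n _ (hC.rot (r := 1) (by omega))
        (by rw [Nat.even_iff]; omega)
      rw [Nat.even_iff] at hae hbe
      unfold rot at hadj'
      rw [if_pos (by omega), if_pos (by omega)] at hadj'
      obtain ⟨p, hp⟩ : ∃ p, p = a + 1 := ⟨_, rfl⟩
      obtain ⟨q, hq⟩ : ∃ q, q = b + 1 := ⟨_, rfl⟩
      rw [← hp, ← hq] at hadj'
      have hqn : q < n := by omega
      have hpj : p < j := by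
        by_contra hc
        have := hch2a p q (by omega) (by omega) hqn hadj'
        omega
      have hqj : j < q := by
        by_contra hc
        have := hch1 p q (by omega) (by omega) hadj'
        omega
      have hend : p = j - 1 ∧ q = n - 1 := by
        by_contra hne
        -- the even cycle `f 0, …, f p, f q, f (q - 1), …, f j` uses both chords; it is shorter
        -- than `n` unless `p = j - 1` and `q = n - 1`
        let g : ℕ → V := fun i => if i ≤ p then f i else f (q + p + 1 - i)
        have hg : IsCyc T (p + q - j + 2) g := by
          refine ⟨by omega, ?_, ?_, ?_⟩
          · intro a b ha hb hab
            simp only [g] at hab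
            split_ifs at hab with c1 c2 c2
            all_goals have := hC.inj _ _ (by omega) (by omega) hab; omega
          · intro a ha
            simp only [g]
            split_ifs with c1 c2 c2
            · exact hC.adj _ (by omega)
            · rwa [show a = p by omega, show q + p + 1 - (p + 1) = q by omega]
            · omega
            · have := hC.adj (q + p + 1 - (a + 1)) (by omega)
              rw [show q + p + 1 - (a + 1) + 1 = q + p + 1 - a by omega] at this
              exact this.symm
          · simp only [g]
            rw [if_neg (by omega), if_pos (by omega),
              show q + p + 1 - (p + q - j + 2 - 1) = j by omega]
            exact hadj.symm
        rcases hgood _ g (by omega) hg with hq | ⟨ho, -⟩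
        · have e1 := hq 0 (p + 1) (by omega) (by omega)
          have e2 := hq p (p + q - j + 1) (by omega) (by omega)
          simp only [g] at e1 e2
          rw [if_pos (by omega), if_neg (by omega), show q + p + 1 - (p + 1) = q by omega] at e1
          rw [if_pos (by omega), if_neg (by omega),
            show q + p + 1 - (p + q - j + 1) = j by omega] at e2
          have := hch2b q hqj hqn e1
          have := hch1 p j hpj (by omega) e2
          omega
        · rw [Nat.odd_iff] at ho; omega
      obtain ⟨rfl, rfl⟩ := hend
      have e := hC.adj (j - 1) (by omega)
      rw [show j - 1 + 1 = j by omega] at e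
      have := hT.four (x := f (j - 1)) (u := f j) (y := f 0) (v := f (n - 1))
        (hd (by omega) (by omega) (by omega)) (hd (by omega) (by omega) (by omega)) e hadj.symm
        hC.close.symm hadj'.symm
      have := hch1 0 (j - 1) (by omega) (by omega) this.symm
      omega

/-- Every cycle of a graph with the property `AltEven` spans a clique or is odd and chordless. -/
theorem AltEven.good (hT : AltEven T) : ∀ n f, IsCyc T n f → GoodCyc T n f := by
  intro n
  induction n using Nat.strong_induction_on with
  | _ n ih =>
    intro f hC
    by_cases hch : Chordless T n f
    · right
      refine ⟨?_, hch⟩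
      by_contra hodd
      rw [Nat.not_odd_iff_even] at hodd
      obtain ⟨i, j, hij, hj, hie, hje, hadj⟩ := hT n f hC hodd
      rw [Nat.even_iff] at hodd hie hje
      have := hch i j hij hj hadj
      omega
    · left
      unfold Chordless at hch
      push Not at hch
      obtain ⟨i, j, hij, hj, hadj, h1, h2⟩ := hch
      refine CliqueOn.of_rot (r := i) (by omega) ?_
      refine hT.clique_of_chord (hC.rot (by omega)) (fun m g hm hg => ih m hm g hg) (j := j - i)
        (by omega) (by omega) ?_
      unfold rot
      rwa [if_pos (by omega), if_pos (by omega), Nat.zero_add, show j - i + i = j by omega]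

/-! ### Sets without ears and a weighted forest bound -/

/-- `g 0, …, g m` is a path of `T` inside `U`, of length at least 2, that meets `B` exactly in its
two (distinct) ends. -/
structure IsEar (T : SimpleGraph V) (U B : Finset V) (m : ℕ) (g : ℕ → V) : Prop where
  two_le : 2 ≤ m
  left_mem : g 0 ∈ B
  right_mem : g m ∈ B
  inj : ∀ i j, i ≤ m → j ≤ m → g i = g j → i = j
  adj : ∀ i, i < m → T.Adj (g i) (g (i + 1))
  mem : ∀ i, i ≤ m → g i ∈ U
  notMem : ∀ i, 0 < i → i < m → g i ∉ B

/-- The graph induced by `T` on `U`, with the edges inside `B` deleted. -/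
def cutGraph (T : SimpleGraph V) (U B : Finset V) : SimpleGraph V where
  Adj x y := T.Adj x y ∧ x ∈ U ∧ y ∈ U ∧ ¬ (x ∈ B ∧ y ∈ B)
  symm := ⟨fun _ _ ⟨h1, h2, h3, h4⟩ => ⟨h1.symm, h3, h2, fun h => h4 h.symm⟩⟩
  loopless := ⟨fun _ h => h.1.ne rfl⟩

/-- Two distinct vertices of `B` that stay connected after deleting the edges inside `B` give rise to an
ear. -/
theorem exists_isEar {U B : Finset V} {b b' : V} (hb : b ∈ B) (hb' : b' ∈ B)
    (hne : b ≠ b') (hr : (cutGraph T U B).Reachable b b') : ∃ m g, IsEar T U B m g := by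
  let P : ℕ → Prop := fun m => ∃ b b', b ∈ B ∧ b' ∈ B ∧ b ≠ b' ∧
    ∃ p : (cutGraph T U B).Walk b b', p.length = m
  have hP : ∃ m, P m := by
    obtain ⟨p⟩ := hr
    exact ⟨_, b, b', hb, hb', hne, p, rfl⟩
  obtain ⟨b, b', hb, hb', hne, p, hp⟩ := Nat.find_spec hP
  have hmin : ∀ m, P m → Nat.find hP ≤ m := fun m hm => Nat.find_min' hP hm
  generalize Nat.find hP = m at hp hmin
  -- a shortest walk between two distinct vertices of `B` is a path
  have hlen : p.bypass.length = m :=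
    le_antisymm (hp ▸ p.length_bypass_le_length) (hmin _ ⟨b, b', hb, hb', hne, _, rfl⟩)
  have hpath := p.bypass_isPath
  generalize p.bypass = q at hlen hpath
  have hadj : ∀ i, i < m → (cutGraph T U B).Adj (q.getVert i) (q.getVert (i + 1)) :=
    fun i hi => q.adj_getVert_succ (by omega)
  have hend : q.getVert m = b' := by rw [← hlen]; exact q.getVert_length
  have hm1 : 1 ≤ m := by
    by_contra h
    have : m = 0 := by omega
    subst this
    exact hne (by rw [← hend]; simp)
  refine ⟨m, q.getVert, ?_, by simpa using hb, by rwa [hend], ?_, fun i hi => (hadj i hi).1,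
    ?_, ?_⟩
  · by_contra h
    have h1 : m = 1 := by omega
    have := (hadj 0 (by omega)).2.2.2
    rw [show 0 + 1 = m by omega, hend] at this
    exact this ⟨by simpa using hb, hb'⟩
  · intro i j hi hj hij
    exact hpath.getVert_injOn (by simpa [hlen] using hi) (by simpa [hlen] using hj) hij
  · intro i hi
    rcases Nat.lt_or_ge i m with h | h
    · exact (hadj i h).2.1
    · have := (hadj (i - 1) (by omega)).2.2.1
      rwa [show i - 1 + 1 = i by omega] at this
  · intro i h0 hi hiB
    by_cases hib : q.getVert i = b
    · have := hpath.getVert_injOn (x₁ := i) (x₂ := 0) (by simp [hlen, hi.le]) (by simp)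
        (by simpa using hib)
      omega
    · have := hmin i ⟨b, _, hb, hiB, fun h => hib h.symm, q.take i, by
        rw [SimpleGraph.Walk.take_length]; omega⟩
      omega

/-- A maximal clique on at least 3 vertices has no ear: closing the ear through a further vertex `w`
of the clique gives a cycle with a chord, hence a clique, so that the first inner vertex of the ear
is adjacent to the whole of `B`. -/
theorem not_isEar_of_clique (hT : AltEven T) {U B : Finset V} (h3 : 3 ≤ B.card)
    (hB : T.IsClique (B : Set V))
    (hmax : ∀ x ∈ U, x ∉ B → ∃ y ∈ B, ¬ T.Adj x y) (m : ℕ) (g : ℕ → V) :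
    ¬ IsEar T U B m g := by
  intro h
  have hm := h.two_le
  have h0m : g 0 ≠ g m := fun e => by have := h.inj _ _ (by omega) le_rfl e; omega
  have key : ∀ w ∈ B, w ≠ g 0 → w ≠ g m →
      T.Adj (g 1) w ∧ T.Adj (g 1) (g m) := by
    intro w hw hw0 hwm
    let f : ℕ → V := fun i => if i ≤ m then g i else w
    have hwg : ∀ i, i ≤ m → g i ≠ w := by
      intro i hi e
      by_cases h1 : i = 0
      · subst h1; exact hw0 e.symm
      by_cases h2 : i = m
      · subst h2; exact hwm e.symm
      exact h.notMem i (by omega) (by omega) (e ▸ hw)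
    have hf : IsCyc T (m + 2) f := by
      refine ⟨by omega, ?_, ?_, ?_⟩
      · intro a b ha hb hab
        simp only [f] at hab
        split_ifs at hab with c1 c2 c2
        · exact h.inj _ _ c1 c2 hab
        · exact absurd hab (hwg _ c1)
        · exact absurd hab.symm (hwg _ c2)
        · omega
      · intro a ha
        simp only [f]
        rw [if_pos (by omega)]
        split_ifs with c
        · exact h.adj _ (by omega)
        · rw [show a = m by omega]
          exact hB h.right_mem hw hwm.symm
      · simpa [f] using hB hw h.left_mem hw0
    rcases hT.good _ f hf with hq | ⟨-, hch⟩
    · have e1 := hq 1 (m + 1) (by omega) (by omega)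
      have e2 := hq 1 m (by omega) (by omega)
      simp only [f] at e1 e2
      rw [if_pos (by omega), if_neg (by omega)] at e1
      rw [if_pos (by omega), if_pos (by omega)] at e2
      exact ⟨e1, e2⟩
    · have := hch 0 m (by omega) (by omega) (by
        simpa [f] using hB h.left_mem h.right_mem h0m)
      omega
  obtain ⟨w, hw⟩ : ((B.erase (g 0)).erase (g m)).Nonempty := by
    rw [← Finset.card_pos, Finset.card_erase_of_mem (by simp [h0m.symm, h.right_mem]),
      Finset.card_erase_of_mem h.left_mem]
    omega
  simp only [Finset.mem_erase] at hw
  obtain ⟨y, hy, hny⟩ := hmax (g 1) (h.mem 1 (by omega)) (h.notMem 1 (by omega) (by omega))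
  by_cases hy0 : y = g 0
  · exact hny (hy0 ▸ (h.adj 0 (by omega)).symm)
  by_cases hym : y = g m
  · exact hny (hym ▸ (key w hw.2.2 hw.2.1 hw.1).2)
  exact hny (key y hy hy0 hym).1

theorem image_rot {r : ℕ} (hr : r < n) :
    (Finset.range n).image (rot n r f) = (Finset.range n).image f := by
  ext x
  simp only [Finset.mem_image, Finset.mem_range]
  constructor
  · rintro ⟨i, hi, rfl⟩
    unfold rot
    split_ifs with h
    · exact ⟨_, h, rfl⟩
    · exact ⟨_, by omega, rfl⟩
  · rintro ⟨i, hi, rfl⟩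
    by_cases hir : r ≤ i
    · exact ⟨i - r, by omega, by unfold rot; rw [if_pos (by omega)]; congr 1; omega⟩
    · exact ⟨i + n - r, by omega, by unfold rot; rw [if_neg (by omega)]; congr 1; omega⟩

/-- If all cycles inside `U` are odd, a cycle inside `U` has no ear: the lengths of the cycle and of
the two cycles that the ear forms with its arcs would have an even sum. -/
theorem not_isEar_of_cycle {U : Finset V}
    (hall : ∀ n f, IsCyc T n f → (∀ i, i < n → f i ∈ U) → Odd n)
    (hC : IsCyc T n f) (hU : ∀ i, i < n → f i ∈ U) (m : ℕ) (g : ℕ → V) :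
    ¬ IsEar T U ((Finset.range n).image f) m g := by
  intro h
  have hm := h.two_le
  -- rotate the cycle so that the ear starts at its initial vertex
  obtain ⟨f, hC, hU, h, h0⟩ : ∃ f, IsCyc T n f ∧ (∀ i, i < n → f i ∈ U) ∧
      IsEar T U ((Finset.range n).image f) m g ∧ g 0 = f 0 := by
    obtain ⟨i, hi, hi0⟩ := Finset.mem_image.1 h.left_mem
    rw [Finset.mem_range] at hi
    refine ⟨rot n i f, hC.rot hi, ?_, by rwa [image_rot hi], ?_⟩
    · intro a ha
      unfold rot
      split_ifs
      · exact hU _ (by omega)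
      · exact hU _ (by omega)
    · rw [← hi0]; unfold rot; rw [if_pos (by omega)]; simp
  obtain ⟨j, hj, hjm⟩ := Finset.mem_image.1 h.right_mem
  rw [Finset.mem_range] at hj
  have hj0 : j ≠ 0 := by
    rintro rfl
    have := h.inj 0 m (by omega) le_rfl (h0.trans hjm)
    omega
  have hnot : ∀ i t, 0 < i → i < m → t < n → f t ≠ g i := fun i t h1 h2 h3 e =>
    h.notMem i h1 h2 (Finset.mem_image.2 ⟨t, Finset.mem_range.2 h3, e⟩)
  have o := hall n f hC hU
  have o1 := hall (j + m) (fun t => if t ≤ j then f t else g (m + j - t)) (by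
    refine ⟨by omega, ?_, ?_, ?_⟩
    · intro a b ha hb hab
      split_ifs at hab with c1 c2 c2
      · exact hC.inj _ _ (by omega) (by omega) hab
      · exact absurd hab (hnot _ _ (by omega) (by omega) (by omega))
      · exact absurd hab.symm (hnot _ _ (by omega) (by omega) (by omega))
      · have := h.inj _ _ (by omega) (by omega) hab; omega
    · intro a ha
      split_ifs with c1 c2 c2
      · exact hC.adj _ (by omega)
      · obtain rfl : a = j := by omega
        rw [hjm]
        have := h.adj (m - 1) (by omega)
        rw [show m - 1 + 1 = m by omega] at this
        rw [show m + a - (a + 1) = m - 1 by omega]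
        exact this.symm
      · omega
      · have := h.adj (m + j - (a + 1)) (by omega)
        rw [show m + j - (a + 1) + 1 = m + j - a by omega] at this
        exact this.symm
    · rw [if_neg (by omega), if_pos (by omega), show m + j - (j + m - 1) = 1 by omega, ← h0]
      exact (h.adj 0 (by omega)).symm) (by
    intro a ha
    split_ifs
    · exact hU _ (by omega)
    · exact h.mem _ (by omega))
  have o2 := hall (n - j + m) (fun t => if t < n - j then f (t + j) else g (t - (n - j))) (by
    refine ⟨by omega, ?_, ?_, ?_⟩
    · intro a b ha hb hab
      split_ifs at hab with c1 c2 c2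
      · have := hC.inj _ _ (by omega) (by omega) hab; omega
      · by_cases hb0 : b = n - j
        · rw [show b - (n - j) = 0 by omega, h0] at hab
          have := hC.inj _ _ (by omega) (by omega) hab; omega
        · exact absurd hab (hnot _ _ (by omega) (by omega) (by omega))
      · by_cases hb0 : a = n - j
        · rw [show a - (n - j) = 0 by omega, h0] at hab
          have := hC.inj _ _ (by omega) (by omega) hab; omega
        · exact absurd hab.symm (hnot _ _ (by omega) (by omega) (by omega))
      · have := h.inj _ _ (by omega) (by omega) hab; omega
    · intro a ha
      split_ifs with c1 c2 c2
      · have := hC.adj (a + j) (by omega)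
        rwa [show a + j + 1 = a + 1 + j by omega] at this
      · rw [show a + 1 - (n - j) = 0 by omega, h0, show a + j = n - 1 by omega]
        exact hC.close
      · omega
      · have := h.adj (a - (n - j)) (by omega)
        rwa [show a - (n - j) + 1 = a + 1 - (n - j) by omega] at this
    · rw [if_neg (by omega), if_pos (by omega), show n - j + m - 1 - (n - j) = m - 1 by omega,
        Nat.zero_add, hjm]
      have := h.adj (m - 1) (by omega)
      rwa [show m - 1 + 1 = m by omega] at this) (by
    intro a ha
    split_ifs
    · exact hU _ (by omega)
    · exact h.mem _ (by omega))
  rw [Nat.odd_iff] at o o1 o2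
  omega

/-- Inside any vertex set containing an edge there is a set without ears that is a clique or the
vertex set of a chordless odd cycle of length at least 5. It is a maximal clique if `U` contains a
triangle, otherwise any cycle inside `U`, and a single edge if there is no cycle. -/
theorem AltEven.exists_block (hT : AltEven T) {U : Finset V} {u v : V} (hu : u ∈ U) (hv : v ∈ U)
    (huv : T.Adj u v) : ∃ B ⊆ U, 2 ≤ B.card ∧ (∀ m g, ¬ IsEar T U B m g) ∧
      (T.IsClique (B : Set V) ∨ ∃ n f, IsCyc T n f ∧ Chordless T n f ∧ Odd n ∧ 5 ≤ n ∧
        B = (Finset.range n).image f) := by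
  by_cases htri : ∃ K ⊆ U, 3 ≤ K.card ∧ T.IsClique (K : Set V)
  · obtain ⟨K, hKU, hK3, hK⟩ := htri
    obtain ⟨B, hB, hmax⟩ := Finset.exists_max_image
      (U.powerset.filter fun K : Finset V => 3 ≤ K.card ∧ T.IsClique (K : Set V)) Finset.card
      ⟨K, by simp [hKU, hK3, hK]⟩
    simp only [Finset.mem_filter, Finset.mem_powerset] at hB hmax
    refine ⟨B, hB.1, by omega, not_isEar_of_clique hT hB.2.1 hB.2.2 ?_, Or.inl hB.2.2⟩
    intro x hxU hxB
    by_contra! hall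
    have := hmax (insert x B) ⟨Finset.insert_subset hxU hB.1, by
      rw [Finset.card_insert_of_notMem hxB]; omega, by
      rw [Finset.coe_insert]
      exact hB.2.2.insert fun y hy _ => hall y hy⟩
    rw [Finset.card_insert_of_notMem hxB] at this
    omega
  · have hnc : ∀ n f, IsCyc T n f → (∀ i, i < n → f i ∈ U) →
        ¬ (T.Adj (f 0) (f 2)) := by
      intro n f hC hU h02
      have h3 := hC.three_le
      have h01 := hC.adj 0 (by omega)
      have h12 := hC.adj 1 (by omega)
      refine htri ⟨{f 0, f 1, f 2}, ?_, ?_, ?_⟩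
      · intro x hx
        simp only [Finset.mem_insert, Finset.mem_singleton] at hx
        rcases hx with rfl | rfl | rfl <;> exact hU _ (by omega)
      · rw [Finset.card_eq_three.2 ⟨_, _, _, h01.ne, h02.ne, h12.ne, rfl⟩]
      · have h10 := h01.symm
        have h20 := h02.symm
        have h21 := h12.symm
        intro x hx y hy hxy
        simp only [Finset.coe_insert, Finset.coe_singleton, Set.mem_insert_iff,
          Set.mem_singleton_iff] at hx hy
        rcases hx with rfl | rfl | rfl <;> rcases hy with rfl | rfl | rfl <;>
          first | assumption | exact absurd rfl hxy
    have hall : ∀ n f, IsCyc T n f → (∀ i, i < n → f i ∈ U) → Odd n ∧ Chordless T n f := by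
      intro n f hC hU
      have h3 := hC.three_le
      exact (hT.good n f hC).resolve_left fun hq => hnc n f hC hU (hq 0 2 (by omega) (by omega))
    by_cases hcyc : ∃ n f, IsCyc T n f ∧ ∀ i, i < n → f i ∈ U
    · obtain ⟨n, f, hC, hU⟩ := hcyc
      obtain ⟨ho, hch⟩ := hall n f hC hU
      have h3 := hC.three_le
      have h5 : 5 ≤ n := by
        by_contra hlt
        have : n = 3 := by rw [Nat.odd_iff] at ho; omega
        subst this
        exact hnc 3 f hC hU hC.close.symm
      refine ⟨_, ?_, ?_, not_isEar_of_cycle (fun n f a b => (hall n f a b).1) hC hU,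
        Or.inr ⟨n, f, hC, hch, ho, h5, rfl⟩⟩
      · intro x hx
        obtain ⟨i, hi, rfl⟩ := Finset.mem_image.1 hx
        exact hU i (Finset.mem_range.1 hi)
      · rw [Finset.card_image_of_injOn, Finset.card_range]
        · omega
        · intro a ha b hb
          exact hC.inj a b (by simpa using ha) (by simpa using hb)
    · have hq : T.IsClique (({u, v} : Finset V) : Set V) := by
        simp [huv]
      refine ⟨{u, v}, ?_, by rw [Finset.card_pair huv.ne], ?_, Or.inl hq⟩
      · intro x hx
        simp only [Finset.mem_insert, Finset.mem_singleton] at hx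
        rcases hx with rfl | rfl <;> assumption
      · intro m g h
        have hm := h.two_le
        refine hcyc ⟨m + 1, g, ⟨by omega, fun i j hi hj => h.inj i j (by omega) (by omega),
          fun i hi => h.adj i (by omega), ?_⟩, fun i hi => h.mem i (by omega)⟩
        refine hq h.right_mem h.left_mem fun e => ?_
        have := h.inj _ _ (by omega) (by omega) e
        omega

/-- A nonnegative weight supported on the edges of `T` that has total at most `|B| - 1` on every
clique and every chordless odd cycle `B` of length at least 5 has total at most `|U| - 1` on every
nonempty `U`; the double sums count each edge twice. For the induction step, let `B` be a set
without ears: every vertex of `U` is assigned to the vertex of `B` in its component after deleting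
the edges inside `B`, and the fibres of this assignment carry all remaining edges. -/
theorem AltEven.sum_weight_le (hT : AltEven T) (w : V → V → ℚ) (hw0 : ∀ x y, 0 ≤ w x y)
    (hw : ∀ x y, ¬ T.Adj x y → w x y = 0)
    (hclique : ∀ B : Finset V, 2 ≤ B.card → T.IsClique (B : Set V) →
      ∑ x ∈ B, ∑ y ∈ B, w x y ≤ 2 * ((B.card : ℚ) - 1))
    (hcycle : ∀ n f, IsCyc T n f → Chordless T n f → Odd n → 5 ≤ n →
      ∑ x ∈ (Finset.range n).image f, ∑ y ∈ (Finset.range n).image f, w x y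
        ≤ 2 * ((n : ℚ) - 1))
    (U : Finset V) (hU : U.Nonempty) : ∑ x ∈ U, ∑ y ∈ U, w x y ≤ 2 * ((U.card : ℚ) - 1) := by
  induction U using Finset.strongInduction with
  | H U ih =>
    by_cases hedge : ∃ u ∈ U, ∃ v ∈ U, T.Adj u v
    · obtain ⟨u, hu, v, hv, huv⟩ := hedge
      obtain ⟨B, hBU, hB2, hear, hBtype⟩ := hT.exists_block hu hv huv
      have hwB : ∑ x ∈ B, ∑ y ∈ B, w x y ≤ 2 * ((B.card : ℚ) - 1) := by
        rcases hBtype with hq | ⟨n, f, hC, hch, ho, h5, rfl⟩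
        · exact hclique B hB2 hq
        · rw [Finset.card_image_of_injOn (fun a ha b hb => hC.inj a b (by simpa using ha)
            (by simpa using hb)), Finset.card_range]
          exact hcycle n f hC hch ho h5
      obtain ⟨b0, hb0⟩ : B.Nonempty := Finset.card_pos.1 (by omega)
      let H := cutGraph T U B
      -- `π` sends a vertex to the vertex of `B` in its component of `H`, if there is one
      let φ : H.ConnectedComponent → V := fun c =>
        if h : ∃ b ∈ B, H.connectedComponentMk b = c then h.choose else b0
      let π : V → V := fun x => φ (H.connectedComponentMk x)
      have hπB : ∀ x, π x ∈ B := by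
        intro x
        simp only [π, φ]
        split_ifs with h
        · exact h.choose_spec.1
        · exact hb0
      have hπ : ∀ b ∈ B, π b = b := by
        intro b hb
        have h : ∃ b' ∈ B, H.connectedComponentMk b' = H.connectedComponentMk b := ⟨b, hb, rfl⟩
        have e : π b = h.choose := by simp only [π, φ]; rw [dif_pos h]
        rw [e]
        by_contra hne
        obtain ⟨m, g, hg⟩ := exists_isEar h.choose_spec.1 hb hne
          (SimpleGraph.ConnectedComponent.exact h.choose_spec.2)
        exact hear m g hg
      have hpt : ∀ x ∈ U, ∀ y ∈ U, w x y ≤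
          (if x ∈ B ∧ y ∈ B then w x y else 0) + (if π x = π y then w x y else 0) := by
        intro x hx y hy
        have := hw0 x y
        by_cases hadj : T.Adj x y
        · by_cases hxy : x ∈ B ∧ y ∈ B
          · rw [if_pos hxy]; split_ifs <;> linarith
          · have : H.Adj x y := ⟨hadj, hx, hy, hxy⟩
            have e : π x = π y := by
              simp only [π]
              rw [SimpleGraph.ConnectedComponent.sound this.reachable]
            rw [if_neg hxy, if_pos e, zero_add]
        · rw [hw x y hadj]; simp
      have hfib : ∀ b ∈ B, ∑ x ∈ U with π x = b, ∑ y ∈ U with π y = b, w x y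
          ≤ 2 * (((U.filter fun x => π x = b).card : ℚ) - 1) := by
        intro b hb
        refine ih _ ?_ ⟨b, by simp [hBU hb, hπ b hb]⟩
        rw [Finset.filter_ssubset]
        obtain ⟨b', hb', hne⟩ := Finset.exists_mem_ne (by omega : 1 < B.card) b
        exact ⟨b', hBU hb', by rw [hπ b' hb']; exact hne⟩
      calc ∑ x ∈ U, ∑ y ∈ U, w x y
          ≤ ∑ x ∈ U, ∑ y ∈ U, ((if x ∈ B ∧ y ∈ B then w x y else 0) +
            (if π x = π y then w x y else 0)) :=
            Finset.sum_le_sum fun x hx => Finset.sum_le_sum fun y hy => hpt x hx y hy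
        _ = ∑ x ∈ B, ∑ y ∈ B, w x y +
            ∑ b ∈ B, ∑ x ∈ U with π x = b, ∑ y ∈ U with π y = b, w x y := by
            simp only [Finset.sum_add_distrib]
            congr 1
            · have hsum : ∀ F : V → ℚ, ∑ x ∈ B, F x = ∑ x ∈ U, if x ∈ B then F x else 0 := by
                intro F
                rw [← Finset.sum_filter, Finset.filter_mem_eq_inter, Finset.inter_eq_right.2 hBU]
              rw [hsum]
              refine Finset.sum_congr rfl fun x _ => ?_
              by_cases hx : x ∈ B
              · simp [hx, hsum]
              · simp [hx]
            · rw [← Finset.sum_fiberwise_of_maps_to (s := U) (t := B) (g := π)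
                (fun x _ => hπB x)]
              refine Finset.sum_congr rfl fun b _ => Finset.sum_congr rfl fun x hx => ?_
              rw [Finset.sum_filter]
              refine Finset.sum_congr rfl fun y _ => ?_
              rw [(Finset.mem_filter.1 hx).2]
              simp only [eq_comm]
        _ ≤ 2 * ((B.card : ℚ) - 1) +
            ∑ b ∈ B, 2 * (((U.filter fun x => π x = b).card : ℚ) - 1) :=
            add_le_add hwB (Finset.sum_le_sum hfib)
        _ = 2 * ((U.card : ℚ) - 1) := by
            have := Finset.card_eq_sum_card_fiberwise (s := U) (t := B) (f := π)
              (fun x _ => hπB x)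
            rw [← Finset.mul_sum, Finset.sum_sub_distrib, ← Nat.cast_sum, ← this]
            simp
            ring
    · push Not at hedge
      rw [Finset.sum_eq_zero fun x hx => Finset.sum_eq_zero fun y hy => hw x y (hedge x hx y hy)]
      have : (1 : ℚ) ≤ U.card := by exact_mod_cast hU.card_pos
      linarith

/-! ### The average degree of the low graph -/

theorem AltEven.chordless_rot (hT : AltEven T) (hC : IsCyc T n f) (h5 : 5 ≤ n)
    (hch : Chordless T n f) {r : ℕ} (hr : r < n) : Chordless T n (rot n r f) := by
  refine ((hT.good n _ (hC.rot hr)).resolve_left fun hq => ?_).2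
  have := hch 0 2 (by omega) (by omega) (hq.of_rot hr 0 2 (by omega) (by omega))
  omega

/-- `K` is a clique on exactly `k` vertices. -/
structure FullClique (T : SimpleGraph V) (k : ℕ) (K : Finset V) : Prop where
  clique : T.IsClique (K : Set V)
  card : K.card = k

variable {k : ℕ} {K K' : Finset V}

/-- A vertex adjacent to two vertices of a full clique lies in it, when no clique has more than `k`
vertices. -/
theorem FullClique.adj_mem (hK : FullClique T k K) (hT : AltEven T)
    (hmax : ∀ K : Finset V, T.IsClique (K : Set V) → K.card ≤ k) {x y z : V} (hx : x ∈ K)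
    (hy : y ∈ K) (hxy : x ≠ y) (hzx : T.Adj z x) (hzy : T.Adj z y) : z ∈ K := by
  by_contra hz
  have := hmax (insert z K) (by
    rw [Finset.coe_insert]
    refine hK.clique.insert fun u hu hzu => ?_
    by_cases hux : u = x
    · exact hux ▸ hzx
    by_cases huy : u = y
    · exact huy ▸ hzy
    exact hT.four hzu hxy hzx (hK.clique hx hu (Ne.symm hux)) (hK.clique hu hy huy) hzy.symm)
  rw [Finset.card_insert_of_notMem hz, hK.card] at this
  omega

theorem FullClique.not_two_outside [Fintype V] (hK : FullClique T k K)
    (hdeg : ∀ x, T.degree x ≤ k) {x a b : V} (hx : x ∈ K) (ha : a ∉ K) (hb : b ∉ K) (hab : a ≠ b)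
    (hxa : T.Adj x a) (hxb : T.Adj x b) : False := by
  have hsub : insert a (insert b (K.erase x)) ⊆ T.neighborFinset x := by
    intro y hy
    simp only [Finset.mem_insert, Finset.mem_erase] at hy
    rw [SimpleGraph.mem_neighborFinset]
    rcases hy with rfl | rfl | ⟨h1, h2⟩
    · exact hxa
    · exact hxb
    · exact hK.clique hx h2 h1.symm
  have := (Finset.card_le_card hsub).trans (hdeg x)
  rw [Finset.card_insert_of_notMem (by simp [hab, ha]), Finset.card_insert_of_notMem
    (by simp [hb]), Finset.card_erase_of_mem hx, hK.card] at this
  have := Finset.card_pos.2 ⟨x, hx⟩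
  rw [hK.card] at this
  omega

/-- Full cliques that meet are equal; the inclusion `K' ⊆ K` suffices by symmetry. -/
theorem FullClique.subset [Fintype V] (hK : FullClique T k K) (hK' : FullClique T k K')
    (hT : AltEven T) (hk : 3 ≤ k) (hdeg : ∀ x, T.degree x ≤ k)
    (hmax : ∀ K : Finset V, T.IsClique (K : Set V) → K.card ≤ k) {v : V} (hv : v ∈ K)
    (hv' : v ∈ K') : K' ⊆ K := by
  intro y hy
  by_contra hyK
  have hu : ∀ u ∈ K', u ≠ v → u ∉ K := fun u hu huv huK =>
    hyK (hK.adj_mem hT hmax hv huK huv.symm (hK'.clique hy hv' fun e => hyK (e ▸ hv))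
      (hK'.clique hy hu fun e => hyK (e ▸ huK)))
  obtain ⟨z, hz⟩ : ((K'.erase v).erase y).Nonempty := by
    rw [← Finset.card_pos, Finset.card_erase_of_mem, Finset.card_erase_of_mem hv', hK'.card]
    · omega
    · exact Finset.mem_erase.2 ⟨fun e => hyK (e ▸ hv), hy⟩
  simp only [Finset.mem_erase] at hz
  exact hK.not_two_outside hdeg hv hyK (hu z hz.2.2 hz.2.1) (Ne.symm hz.1)
    (hK'.clique hv' hy fun e => hyK (e ▸ hv)) (hK'.clique hv' hz.2.2 (Ne.symm hz.2.1))

/-- A full clique does not contain two consecutive vertices of a long chordless odd cycle: a third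
vertex of the clique would be adjacent to both, against `AltEven.no_apex`. -/
theorem FullClique.not_two_on_cycle (hK : FullClique T k K) (hT : AltEven T) (hk : 3 ≤ k)
    (hC : IsCyc T n f) (h5 : 5 ≤ n) (ho : Odd n) (hch : Chordless T n f)
    (h0 : f 0 ∈ K) (h1 : f (n - 1) ∈ K) : False := by
  obtain ⟨u, hu⟩ : ((K.erase (f 0)).erase (f (n - 1))).Nonempty := by
    rw [← Finset.card_pos, Finset.card_erase_of_mem, Finset.card_erase_of_mem h0, hK.card]
    · omega
    · simp [h1, hC.close.ne]
  simp only [Finset.mem_erase] at hu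
  have a0 : T.Adj u (f 0) := hK.clique hu.2.2 h0 hu.2.1
  have a1 : T.Adj u (f (n - 1)) := hK.clique hu.2.2 h1 hu.1
  refine hT.no_apex hC h5 ho hch (fun m g _ => hT.good m g) (fun t ht e => ?_) a0 a1
  subst e
  have t0 : t ≠ 0 := by rintro rfl; exact hu.2.1 rfl
  have t1 : t ≠ n - 1 := by rintro rfl; exact hu.1 rfl
  have := hch 0 t (by omega) ht a0.symm
  have := hch t (n - 1) (by omega) (by omega) a1
  omega

/-- A full clique is disjoint from every long chordless odd cycle: at a common vertex either a cycle
neighbour also lies in the clique, or both leave it and the degree exceeds `k`. -/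
theorem FullClique.notMem_of_cycle [Fintype V] (hK : FullClique T k K) (hT : AltEven T)
    (hk : 3 ≤ k) (hdeg : ∀ x, T.degree x ≤ k)
    (hC : IsCyc T n f) (h5 : 5 ≤ n) (ho : Odd n) (hch : Chordless T n f) {i : ℕ} (hi : i < n) :
    f i ∉ K := by
  intro hiK
  obtain ⟨g, hC, hch, h0⟩ : ∃ g, IsCyc T n g ∧ Chordless T n g ∧ g 0 ∈ K :=
    ⟨rot n i f, hC.rot hi, hT.chordless_rot hC h5 hch hi, by
      unfold rot; rw [if_pos (by omega), Nat.zero_add]; exact hiK⟩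
  by_cases hl : g (n - 1) ∈ K
  · exact hK.not_two_on_cycle hT hk hC h5 ho hch h0 hl
  by_cases hr : g 1 ∈ K
  · refine hK.not_two_on_cycle hT hk (hC.rot (r := 1) (by omega)) h5 ho
      (hT.chordless_rot hC h5 hch (by omega)) ?_ ?_
    · unfold rot; rw [if_pos (by omega)]; exact hr
    · unfold rot; rw [if_neg (by omega), show n - 1 + 1 - n = 0 by omega]; exact h0
  · exact hK.not_two_outside hdeg h0 hl hr
      (fun e => by have := hC.inj _ _ (by omega) (by omega) e; omega) hC.close.symm
      (hC.adj 0 (by omega))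

/-- The edge weight to which `AltEven.sum_weight_le` is applied: `2 / k` on edges inside a full
clique, `1` on other edges meeting a full clique, and `2 / (k - 1 + 2 / k)` on the remaining
edges. -/
noncomputable def wt (T : SimpleGraph V) (k : ℕ) (x y : V) : ℚ :=
  if T.Adj x y then
    if ∃ K, FullClique T k K ∧ x ∈ K ∧ y ∈ K then 2 / k
    else if ∃ K, FullClique T k K ∧ (x ∈ K ∨ y ∈ K) then 1
    else 2 / ((k : ℚ) - 1 + 2 / k)
  else 0

theorem beta_ge (hk : 3 ≤ k) : (8 : ℚ) / 3 ≤ (k : ℚ) - 1 + 2 / k := by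
  have h : (3 : ℚ) ≤ k := by exact_mod_cast hk
  rw [← sub_nonneg]
  have : (k : ℚ) - 1 + 2 / k - 8 / 3 = (3 * k - 2) * (k - 3) / (3 * k) := by
    field_simp
    ring
  rw [this]
  apply div_nonneg
  · apply mul_nonneg <;> linarith
  · linarith

theorem wt_nonneg (hk : 3 ≤ k) (x y : V) : 0 ≤ wt T k x y := by
  have := beta_ge hk
  unfold wt
  split_ifs <;> positivity

/-- Weights at most `c ≤ 2 / |B|` between the vertices of `B` have total at most `|B| - 1`, each
pair being counted twice in the double sum. -/
theorem sum_clique_le (c : ℚ) {B : Finset V} {w : V → V → ℚ} (hself : ∀ x, w x x = 0)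
    (hB : 1 ≤ B.card) (hw : ∀ x ∈ B, ∀ y ∈ B, x ≠ y → w x y ≤ c) (hc : c * B.card ≤ 2) :
    ∑ x ∈ B, ∑ y ∈ B, w x y ≤ 2 * ((B.card : ℚ) - 1) := by
  have h1 : ∀ x ∈ B, ∑ y ∈ B, w x y ≤ ((B.card : ℚ) - 1) * c := by
    intro x hx
    rw [← Finset.add_sum_erase _ _ hx, hself, zero_add]
    refine (Finset.sum_le_card_nsmul _ _ c fun y hy => hw x hx y (Finset.mem_of_mem_erase hy)
      (Finset.ne_of_mem_erase hy).symm).trans ?_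
    rw [Finset.card_erase_of_mem hx, nsmul_eq_mul, Nat.cast_sub hB]
    simp
  refine (Finset.sum_le_card_nsmul _ _ _ h1).trans ?_
  rw [nsmul_eq_mul]
  have : (1 : ℚ) ≤ B.card := by exact_mod_cast hB
  nlinarith

/-- The weight `wt` satisfies the hypothesis of `AltEven.sum_weight_le` on cliques. A clique with two
vertices in a common full clique lies inside it; one that meets a full clique in any other way is a
single edge; one that meets none has at most `k - 1` vertices. -/
theorem wt_clique [Fintype V] (hT : AltEven T) (hk : 3 ≤ k) (hdeg : ∀ x, T.degree x ≤ k)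
    (hmax : ∀ K : Finset V, T.IsClique (K : Set V) → K.card ≤ k) (B : Finset V)
    (hB2 : 2 ≤ B.card) (hB : T.IsClique (B : Set V)) :
    ∑ x ∈ B, ∑ y ∈ B, wt T k x y ≤ 2 * ((B.card : ℚ) - 1) := by
  have hkq : (3 : ℚ) ≤ k := by exact_mod_cast hk
  have hβ := beta_ge hk
  have hself : ∀ x, wt T k x x = 0 := fun x => by simp [wt]
  by_cases hex : ∃ x ∈ B, ∃ y ∈ B, x ≠ y ∧ ∃ K, FullClique T k K ∧ x ∈ K ∧ y ∈ K
  · obtain ⟨x, hx, y, hy, hxy, K, hK, hxK, hyK⟩ := hex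
    have hBK : B ⊆ K := by
      intro z hz
      by_cases h1 : z = x
      · exact h1 ▸ hxK
      by_cases h2 : z = y
      · exact h2 ▸ hyK
      exact hK.adj_mem hT hmax hxK hyK hxy (hB hz hx h1) (hB hz hy h2)
    refine sum_clique_le (2 / k) hself (by omega) ?_ ?_
    · intro a ha b hb hab
      unfold wt
      rw [if_pos (hB ha hb hab), if_pos ⟨K, hK, hBK ha, hBK hb⟩]
    · have : (B.card : ℚ) ≤ k := by exact_mod_cast hmax B hB
      rw [div_mul_eq_mul_div, div_le_iff₀ (by linarith)]
      linarith
  · push Not at hex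
    by_cases hin : ∃ x ∈ B, ∃ K, FullClique T k K ∧ x ∈ K
    · obtain ⟨x, hx, K, hK, hxK⟩ := hin
      have hcard : B.card = 2 := by
        by_contra hne
        obtain ⟨a, ha⟩ : (B.erase x).Nonempty := by
          rw [← Finset.card_pos, Finset.card_erase_of_mem hx]; omega
        obtain ⟨b, hb⟩ : ((B.erase x).erase a).Nonempty := by
          rw [← Finset.card_pos, Finset.card_erase_of_mem ha, Finset.card_erase_of_mem hx]
          omega
        simp only [Finset.mem_erase] at ha hb
        exact hK.not_two_outside hdeg hxK (hex x hx a ha.2 (Ne.symm ha.1) K hK hxK)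
          (hex x hx b hb.2.2 (Ne.symm hb.2.1) K hK hxK) (Ne.symm hb.1)
          (hB hx ha.2 (Ne.symm ha.1)) (hB hx hb.2.2 (Ne.symm hb.2.1))
      refine sum_clique_le 1 hself (by omega) ?_ (by rw [hcard]; norm_num)
      intro a _ b _ _
      unfold wt
      split_ifs
      · rw [div_le_one (by linarith)]; linarith
      · exact le_rfl
      · rw [div_le_one (by linarith)]; linarith
      · norm_num
    · push Not at hin
      refine sum_clique_le (2 / ((k : ℚ) - 1 + 2 / k)) hself (by omega) ?_ ?_
      · intro a ha b hb hab
        unfold wt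
        rw [if_pos (hB ha hb hab), if_neg, if_neg]
        · rintro ⟨K, hK, h | h⟩
          exacts [hin a ha K hK h, hin b hb K hK h]
        · rintro ⟨K, hK, h, -⟩
          exact hin a ha K hK h
      · -- `B` contains no clique of order `k`
        have hlt : B.card < k := by
          by_contra! hge
          obtain ⟨K, hKB, hKc⟩ := Finset.exists_subset_card_eq hge
          obtain ⟨x, hx⟩ : K.Nonempty := Finset.card_pos.1 (by omega)
          exact hin x (hKB hx) K ⟨hB.subset (by exact_mod_cast hKB), hKc⟩ hx
        have h1 : (B.card : ℚ) + 1 ≤ k := by exact_mod_cast hlt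
        have h2 : (0 : ℚ) ≤ 2 / k := by positivity
        rw [div_mul_eq_mul_div, div_le_iff₀ (by linarith)]
        linarith

/-- The weight `wt` satisfies the hypothesis of `AltEven.sum_weight_le` on long chordless odd cycles,
whose edges all have weight `2 / (k - 1 + 2 / k) ≤ 3 / 4`. -/
theorem wt_cycle [Fintype V] (hT : AltEven T) (hk : 3 ≤ k) (hdeg : ∀ x, T.degree x ≤ k)
    (n : ℕ) (f : ℕ → V) (hC : IsCyc T n f) (hch : Chordless T n f) (ho : Odd n) (h5 : 5 ≤ n) :
    ∑ x ∈ (Finset.range n).image f, ∑ y ∈ (Finset.range n).image f, wt T k x y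
      ≤ 2 * ((n : ℚ) - 1) := by
  have hβ := beta_ge hk
  have hle : ∀ x ∈ (Finset.range n).image f, ∑ y ∈ (Finset.range n).image f, wt T k x y
      ≤ 4 / ((k : ℚ) - 1 + 2 / k) := by
    intro x hx
    obtain ⟨i, hi, rfl⟩ := Finset.mem_image.1 hx
    rw [Finset.mem_range] at hi
    let N : Finset V := {f (if i + 1 < n then i + 1 else 0), f (if i = 0 then n - 1 else i - 1)}
    have hwt : ∀ y ∈ (Finset.range n).image f, wt T k (f i) y ≤
        if y ∈ N then 2 / ((k : ℚ) - 1 + 2 / k) else 0 := by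
      intro y hy
      obtain ⟨j, hj, rfl⟩ := Finset.mem_image.1 hy
      rw [Finset.mem_range] at hj
      by_cases hadj : T.Adj (f i) (f j)
      · have hN : f j ∈ N := by
          rcases lt_trichotomy i j with h | h | h
          · rcases hch i j h hj hadj with h' | h'
            · subst h'; simp [N, hj]
            · obtain ⟨rfl, rfl⟩ := h'; simp [N]
          · subst h; exact absurd rfl hadj.ne
          · rcases hch j i h hi hadj.symm with h' | h'
            · subst h'; simp [N]
            · obtain ⟨rfl, rfl⟩ := h'
              have : ¬ (n - 1 + 1 < n) := by omega
              simp [N, this]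
        rw [if_pos hN]
        unfold wt
        rw [if_pos hadj, if_neg, if_neg]
        · rintro ⟨K, hK, h | h⟩
          exacts [hK.notMem_of_cycle hT hk hdeg hC h5 ho hch hi h,
            hK.notMem_of_cycle hT hk hdeg hC h5 ho hch hj h]
        · rintro ⟨K, hK, h, -⟩
          exact hK.notMem_of_cycle hT hk hdeg hC h5 ho hch hi h
      · unfold wt
        rw [if_neg hadj]
        split_ifs
        · positivity
        · exact le_rfl
    refine (Finset.sum_le_sum hwt).trans ?_
    rw [← Finset.sum_filter, Finset.sum_const, nsmul_eq_mul]
    have hN2 : (((Finset.range n).image f).filter (· ∈ N)).card ≤ 2 :=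
      (Finset.card_le_card (fun y hy => (Finset.mem_filter.1 hy).2)).trans Finset.card_le_two
    have hN2' : ((((Finset.range n).image f).filter (· ∈ N)).card : ℚ) ≤ 2 := by
      exact_mod_cast hN2
    calc _ ≤ 2 * (2 / ((k : ℚ) - 1 + 2 / k)) :=
          mul_le_mul_of_nonneg_right hN2' (by positivity)
      _ = _ := by ring
  refine (Finset.sum_le_card_nsmul _ _ _ hle).trans ?_
  rw [Finset.card_image_of_injOn (fun a ha b hb => hC.inj a b (by simpa using ha)
    (by simpa using hb)), Finset.card_range, nsmul_eq_mul, mul_div_assoc',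
    div_le_iff₀ (by linarith)]
  have : (5 : ℚ) ≤ n := by exact_mod_cast h5
  nlinarith

/-- The subgraph of `T` induced on `L` has average degree at most `β = k - 1 + 2 / k`. An edge inside
a full clique is counted as `wt + (1 - 2 / k)`, an edge meeting no full clique as
`wt + (β - 2) / 2 * wt`, any other edge as `wt`. The terms `1 - 2 / k` add up to at most
`(1 - 2 / k) * (k - 1) = β - 2` per vertex in a full clique, and the terms `(β - 2) / 2 * wt` to at
most `β - 2` per vertex outside all full cliques; `wt` itself adds up to at most `2` per vertex. -/
theorem AltEven.sum_adj_le [Fintype V] (hT : AltEven T) (hk : 3 ≤ k)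
    (hdeg : ∀ x, T.degree x ≤ k)
    (hmax : ∀ K : Finset V, T.IsClique (K : Set V) → K.card ≤ k) (L : Finset V) :
    ∑ x ∈ L, ∑ y ∈ L, (if T.Adj x y then (1 : ℚ) else 0) ≤ ((k : ℚ) - 1 + 2 / k) * L.card := by
  have hkq : (3 : ℚ) ≤ k := by exact_mod_cast hk
  have hβ := beta_ge hk
  set β : ℚ := (k : ℚ) - 1 + 2 / k with hβdef
  have hX : ∀ U : Finset V, ∑ x ∈ U, ∑ y ∈ U, wt T k x y ≤ 2 * (U.card : ℚ) := by
    intro U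
    rcases U.eq_empty_or_nonempty with rfl | hU
    · simp
    · have := hT.sum_weight_le (wt T k) (wt_nonneg hk) (fun x y h => by simp [wt, h])
        (wt_clique hT hk hdeg hmax) (wt_cycle hT hk hdeg) U hU
      linarith
  let inK : V → Prop := fun x => ∃ K, FullClique T k K ∧ x ∈ K
  let κ : V → V → Prop := fun x y => T.Adj x y ∧ ∃ K, FullClique T k K ∧ x ∈ K ∧ y ∈ K
  have hpt : ∀ x y, (if T.Adj x y then (1 : ℚ) else 0) ≤ wt T k x y +
      (1 - 2 / k) * (if κ x y then 1 else 0) +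
      (β - 2) / 2 * (if ¬ inK x ∧ ¬ inK y then wt T k x y else 0) := by
    intro x y
    have hw0 := wt_nonneg (T := T) hk x y
    have h3 : 0 ≤ (β - 2) / 2 * (if ¬ inK x ∧ ¬ inK y then wt T k x y else 0) := by
      apply mul_nonneg
      · linarith
      · split_ifs <;> [exact hw0; exact le_rfl]
    have h2 : 0 ≤ (1 - 2 / (k : ℚ)) * (if κ x y then 1 else 0) := by
      apply mul_nonneg
      · rw [sub_nonneg, div_le_one (by linarith)]; linarith
      · split_ifs <;> norm_num
    by_cases hadj : T.Adj x y
    · rw [if_pos hadj]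
      by_cases hκ : ∃ K, FullClique T k K ∧ x ∈ K ∧ y ∈ K
      · have hw : wt T k x y = 2 / k := by unfold wt; rw [if_pos hadj, if_pos hκ]
        rw [if_pos (show κ x y from ⟨hadj, hκ⟩)]
        linarith
      · by_cases hin : ∃ K, FullClique T k K ∧ (x ∈ K ∨ y ∈ K)
        · have hw : wt T k x y = 1 := by unfold wt; rw [if_pos hadj, if_neg hκ, if_pos hin]
          linarith
        · have hw : wt T k x y = 2 / β := by
            unfold wt; rw [if_pos hadj, if_neg hκ, if_neg hin]
          rw [if_pos (show ¬ inK x ∧ ¬ inK y from ⟨fun ⟨K, h1, h2⟩ => hin ⟨K, h1, Or.inl h2⟩,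
            fun ⟨K, h1, h2⟩ => hin ⟨K, h1, Or.inr h2⟩⟩), hw]
          have : 2 / β + (β - 2) / 2 * (2 / β) = 1 := by
            have : β ≠ 0 := by linarith
            field_simp
            ring
          linarith
    · rw [if_neg hadj]
      linarith
  have hκ : ∀ x ∈ L, ∑ y ∈ L, (if κ x y then (1 : ℚ) else 0) ≤
      if inK x then (k : ℚ) - 1 else 0 := by
    intro x _
    by_cases hin : inK x
    · obtain ⟨K, hK, hxK⟩ := id hin
      rw [if_pos hin, ← Finset.sum_filter, Finset.sum_const, nsmul_eq_mul, mul_one]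
      have hsub : L.filter (κ x) ⊆ K.erase x := by
        intro y hy
        obtain ⟨-, hadj, K', hK', hx', hy'⟩ := Finset.mem_filter.1 hy
        exact Finset.mem_erase.2 ⟨hadj.ne', hK.subset hK' hT hk hdeg hmax hxK hx' hy'⟩
      have := Finset.card_le_card hsub
      rw [Finset.card_erase_of_mem hxK, hK.card] at this
      have h' : (L.filter (κ x)).card + 1 ≤ k := by omega
      have h'' : ((L.filter (κ x)).card : ℚ) + 1 ≤ k := by exact_mod_cast h'
      linarith
    · rw [if_neg hin, Finset.sum_eq_zero]
      intro y _
      rw [if_neg]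
      rintro ⟨-, K, hK, h, -⟩
      exact hin ⟨K, hK, h⟩
  have hW : ∑ x ∈ L, ∑ y ∈ L, (if ¬ inK x ∧ ¬ inK y then wt T k x y else 0)
      ≤ 2 * ((L.filter fun x => ¬ inK x).card : ℚ) := by
    refine le_trans (le_of_eq ?_) (hX _)
    rw [Finset.sum_filter]
    refine Finset.sum_congr rfl fun x _ => ?_
    by_cases hx : inK x
    · simp [hx]
    · simp [hx, Finset.sum_filter]
  have hS : ∑ x ∈ L, (if inK x then (k : ℚ) - 1 else 0)
      = ((L.filter inK).card : ℚ) * (k - 1) := by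
    rw [← Finset.sum_filter, Finset.sum_const, nsmul_eq_mul]
  have hcard : ((L.filter inK).card : ℚ) + ((L.filter fun x => ¬ inK x).card : ℚ) = L.card := by
    exact_mod_cast Finset.card_filter_add_card_filter_not (s := L) inK
  have hk2 : (0 : ℚ) ≤ 1 - 2 / k := by
    rw [sub_nonneg, div_le_one (by linarith)]; linarith
  calc ∑ x ∈ L, ∑ y ∈ L, (if T.Adj x y then (1 : ℚ) else 0)
      ≤ ∑ x ∈ L, ∑ y ∈ L, (wt T k x y + (1 - 2 / k) * (if κ x y then 1 else 0) +
        (β - 2) / 2 * (if ¬ inK x ∧ ¬ inK y then wt T k x y else 0)) :=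
        Finset.sum_le_sum fun x _ => Finset.sum_le_sum fun y _ => hpt x y
    _ = ∑ x ∈ L, ∑ y ∈ L, wt T k x y +
        (1 - 2 / k) * ∑ x ∈ L, ∑ y ∈ L, (if κ x y then (1 : ℚ) else 0) +
        (β - 2) / 2 * ∑ x ∈ L, ∑ y ∈ L, (if ¬ inK x ∧ ¬ inK y then wt T k x y else 0) := by
        simp only [Finset.sum_add_distrib, Finset.mul_sum]
    _ ≤ 2 * (L.card : ℚ) + (1 - 2 / k) * (((L.filter inK).card : ℚ) * (k - 1)) +
        (β - 2) / 2 * (2 * ((L.filter fun x => ¬ inK x).card : ℚ)) := by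
        refine add_le_add (add_le_add (hX L) (mul_le_mul_of_nonneg_left ?_ hk2))
          (mul_le_mul_of_nonneg_left hW (by linarith))
        exact (Finset.sum_le_sum hκ).trans hS.le
    _ = β * L.card := by
        have : (1 - 2 / (k : ℚ)) * (k - 1) = β - 2 := by
          rw [hβdef]; field_simp; ring
        rw [← hcard]
        linear_combination ((L.filter inK).card : ℚ) * this

end Cycles

/-! ### Kernels and list colourings -/

/-- Let the edges of `G` inside `S` be directed by `D`, each in at least one direction, so that
`S ∩ A` is independent and the edges inside `S \ A` have both directions. Then `S` has a kernel: an
independent set receiving an arc from every other vertex. Either `S ∩ A` is a kernel, or some `b`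
outside `A` has no arc into `S ∩ A`. In the second case every neighbour of `b` has an arc to `b`,
and adding `b` to a kernel of the set of its non-neighbours gives a kernel. -/
theorem exists_kernel {V : Type} (G : SimpleGraph V) (A : Set V) (D : V → V → Prop) (S : Finset V)
    (hA : ∀ x ∈ S, ∀ y ∈ S, x ∈ A → y ∈ A → ¬ G.Adj x y)
    (hB : ∀ x ∈ S, ∀ y ∈ S, x ∉ A → y ∉ A → G.Adj x y → D x y)
    (hAB : ∀ x ∈ S, ∀ y ∈ S, G.Adj x y → D x y ∨ D y x) :
    ∃ K ⊆ S, (∀ x ∈ K, ∀ y ∈ K, ¬ G.Adj x y) ∧ ∀ x ∈ S, x ∉ K → ∃ y ∈ K, G.Adj x y ∧ D x y := by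
  induction S using Finset.strongInduction with
  | H S ih =>
  by_cases h : ∃ b ∈ S, b ∉ A ∧ ∀ y ∈ S, y ∈ A → G.Adj b y → ¬ D b y
  · obtain ⟨b, hb, hbA, hby⟩ := h
    have hss : S.filter (fun x => x ≠ b ∧ ¬ (G.Adj x b ∧ D x b)) ⊂ S :=
      Finset.filter_ssubset.2 ⟨b, hb, by simp⟩
    obtain ⟨K, hKS, hK, hKd⟩ := ih _ hss
      (fun x hx y hy => hA x (hss.1 hx) y (hss.1 hy)) (fun x hx y hy => hB x (hss.1 hx) y (hss.1 hy))
      (fun x hx y hy => hAB x (hss.1 hx) y (hss.1 hy))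
    have hbK : ∀ y ∈ K, ¬ G.Adj y b := by
      intro y hy hadj
      obtain ⟨hyS, hyb, hn⟩ := Finset.mem_filter.1 (hKS hy)
      have hnD : ¬ D y b := fun hD => hn ⟨hadj, hD⟩
      by_cases hyA : y ∈ A
      · rcases hAB y hyS b hb hadj with h1 | h1
        · exact hnD h1
        · exact hby y hyS hyA hadj.symm h1
      · exact hnD (hB y hyS b hb hyA hbA hadj)
    refine ⟨insert b K, Finset.insert_subset hb (hKS.trans hss.1), ?_, ?_⟩
    · intro x hx y hy
      rcases Finset.mem_insert.1 hx with rfl | hx1 <;> rcases Finset.mem_insert.1 hy with rfl | hy1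
      · exact G.loopless.irrefl _
      · exact fun h => hbK y hy1 h.symm
      · exact hbK x hx1
      · exact hK x hx1 y hy1
    · intro x hx hxK
      rw [Finset.mem_insert, not_or] at hxK
      by_cases hxb : G.Adj x b ∧ D x b
      · exact ⟨b, Finset.mem_insert_self _ _, hxb⟩
      · obtain ⟨y, hy, h⟩ := hKd x (Finset.mem_filter.2 ⟨hx, hxK.1, hxb⟩) hxK.2
        exact ⟨y, Finset.mem_insert_of_mem hy, h⟩
  · push Not at h
    refine ⟨S.filter (· ∈ A), Finset.filter_subset _ _, ?_, ?_⟩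
    · intro x hx y hy
      rw [Finset.mem_filter] at hx hy
      exact hA x hx.1 y hy.1 hx.2 hy.2
    · intro x hx hxK
      obtain ⟨y, hy, hyA, h1, h2⟩ := h x hx fun hxA => hxK (Finset.mem_filter.2 ⟨hx, hxA⟩)
      exact ⟨y, Finset.mem_filter.2 ⟨hy, hyA⟩, h1, h2⟩

/-- Galvin's argument: under the hypotheses of `exists_kernel`, lists longer than the out-degrees
admit a proper colouring. A colour `a` is given to a kernel of the vertices having `a` in their
lists; every other vertex that loses `a` loses an out-neighbour too. -/
theorem exists_list_coloring {V : Type} (G : SimpleGraph V) (A : Set V) (D : V → V → Prop)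
    (Q : Finset V)
    (hA : ∀ x ∈ Q, ∀ y ∈ Q, x ∈ A → y ∈ A → ¬ G.Adj x y)
    (hB : ∀ x ∈ Q, ∀ y ∈ Q, x ∉ A → y ∉ A → G.Adj x y → D x y)
    (hAB : ∀ x ∈ Q, ∀ y ∈ Q, G.Adj x y → D x y ∨ D y x)
    (l : V → Finset ℕ)
    (hl : ∀ x ∈ Q, (Q.filter fun y => G.Adj x y ∧ D x y).card < (l x).card) :
    ∃ col : V → ℕ, (∀ x ∈ Q, col x ∈ l x) ∧ ∀ x ∈ Q, ∀ y ∈ Q, G.Adj x y → col x ≠ col y := by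
  induction Q using Finset.strongInduction generalizing l with
  | H Q ih =>
  rcases Q.eq_empty_or_nonempty with rfl | ⟨v, hv⟩
  · exact ⟨fun _ => 0, by simp⟩
  obtain ⟨a, ha⟩ : (l v).Nonempty := Finset.card_pos.1 (lt_of_le_of_lt (Nat.zero_le _) (hl v hv))
  have hSQ : Q.filter (fun x => a ∈ l x) ⊆ Q := Finset.filter_subset _ _
  obtain ⟨K, hKS, hK, hKd⟩ := exists_kernel G A D (Q.filter fun x => a ∈ l x)
    (fun x hx y hy => hA x (hSQ hx) y (hSQ hy)) (fun x hx y hy => hB x (hSQ hx) y (hSQ hy))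
    (fun x hx y hy => hAB x (hSQ hx) y (hSQ hy))
  have hKne : K.Nonempty := by
    by_cases hvK : v ∈ K
    · exact ⟨v, hvK⟩
    · obtain ⟨y, hy, -⟩ := hKd v (Finset.mem_filter.2 ⟨hv, ha⟩) hvK
      exact ⟨y, hy⟩
  have hKQ : K ⊆ Q := hKS.trans hSQ
  have hss : Q \ K ⊂ Q := Finset.sdiff_ssubset hKQ hKne
  obtain ⟨col, hcol, hprop⟩ := ih (Q \ K) hss
    (fun x hx y hy => hA x (hss.1 hx) y (hss.1 hy)) (fun x hx y hy => hB x (hss.1 hx) y (hss.1 hy))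
    (fun x hx y hy => hAB x (hss.1 hx) y (hss.1 hy)) (fun x => (l x).erase a) (by
      intro x hx
      obtain ⟨hxQ, hxK⟩ := Finset.mem_sdiff.1 hx
      have hlx := hl x hxQ
      have hmono : ((Q \ K).filter fun y => G.Adj x y ∧ D x y) ⊆
          Q.filter fun y => G.Adj x y ∧ D x y := Finset.filter_subset_filter _ hss.1
      by_cases hax : a ∈ l x
      · obtain ⟨y, hy, hxy⟩ := hKd x (Finset.mem_filter.2 ⟨hxQ, hax⟩) hxK
        have hlt : ((Q \ K).filter fun y => G.Adj x y ∧ D x y).card <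
            (Q.filter fun y => G.Adj x y ∧ D x y).card := by
          refine Finset.card_lt_card (Finset.ssubset_iff_subset_ne.2 ⟨hmono, fun e => ?_⟩)
          have : y ∈ Q.filter fun y => G.Adj x y ∧ D x y := Finset.mem_filter.2 ⟨hKQ hy, hxy⟩
          rw [← e] at this
          exact (Finset.mem_sdiff.1 (Finset.mem_filter.1 this).1).2 hy
        rw [Finset.card_erase_of_mem hax]
        omega
      · rw [Finset.erase_eq_of_notMem hax]
        exact lt_of_le_of_lt (Finset.card_le_card hmono) hlx)
  refine ⟨fun x => if x ∈ K then a else col x, ?_, ?_⟩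
  · intro x hx
    dsimp only
    split_ifs with h
    · exact (Finset.mem_filter.1 (hKS h)).2
    · exact Finset.mem_of_mem_erase (hcol x (Finset.mem_sdiff.2 ⟨hx, h⟩))
  · intro x hx y hy hadj
    dsimp only
    split_ifs with h1 h2 h2
    · exact absurd hadj (hK x h1 y h2)
    · exact (Finset.ne_of_mem_erase (hcol y (Finset.mem_sdiff.2 ⟨hy, h2⟩))).symm
    · exact Finset.ne_of_mem_erase (hcol x (Finset.mem_sdiff.2 ⟨hx, h1⟩))
    · exact hprop x (Finset.mem_sdiff.2 ⟨hx, h1⟩) y (Finset.mem_sdiff.2 ⟨hy, h2⟩) hadj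

/-! ### Critical graphs -/

theorem CCritical.not_colorable {V : Type} [Fintype V] {G : SimpleGraph V} {k : ℕ}
    (hG : CCritical (k + 1) G) : ¬ G.Colorable k := by
  intro h
  have := h.chromaticNumber_le
  rw [hG.1] at this
  have : k + 1 ≤ k := by exact_mod_cast this
  omega

/-- Removing a nonempty vertex set `Q` from a critical graph leaves a `k`-colourable graph; the
values of `col` on `Q` are irrelevant. -/
theorem CCritical.exists_outside {V : Type} [Fintype V] {G : SimpleGraph V} {k : ℕ}
    (hG : CCritical (k + 1) G) {Q : Finset V} (hQ : Q.Nonempty) :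
    ∃ col : V → ℕ, (∀ x ∉ Q, col x < k) ∧ ∀ x ∉ Q, ∀ y ∉ Q, G.Adj x y → col x ≠ col y := by
  have hne : (⊤ : G.Subgraph).deleteVerts (Q : Set V) ≠ ⊤ := by
    intro e
    obtain ⟨v, hv⟩ := hQ
    have : v ∈ ((⊤ : G.Subgraph).deleteVerts (Q : Set V)).verts := by rw [e]; trivial
    exact this.2 hv
  obtain ⟨C⟩ := hG.2 _ hne
  refine ⟨fun x => if h : x ∉ Q then (C ⟨x, ⟨trivial, h⟩⟩ : ℕ) else 0, ?_, ?_⟩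
  · intro x hx
    dsimp only
    rw [dif_pos hx]
    exact (C _).isLt
  · intro x hx y hy hadj
    dsimp only
    rw [dif_pos hx, dif_pos hy]
    intro e
    refine C.valid (v := ⟨x, ⟨trivial, hx⟩⟩) (w := ⟨y, ⟨trivial, hy⟩⟩) ?_ (Fin.ext e)
    simp [hx, hy, hadj]

/-- Under the hypotheses of `exists_kernel`, some vertex of `Q` has at least `k` neighbours that are
outside `Q` or out-neighbours. Otherwise a `k`-colouring of `G - Q` extends to `G`, by
`exists_list_coloring` with the lists of colours not used on the neighbours outside `Q`. -/
theorem CCritical.exists_outdegree {V : Type} [Fintype V] {G : SimpleGraph V} {k : ℕ}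
    (hG : CCritical (k + 1) G) (A : Set V) (D : V → V → Prop) (Q : Finset V) (hQ : Q.Nonempty)
    (hA : ∀ x ∈ Q, ∀ y ∈ Q, x ∈ A → y ∈ A → ¬ G.Adj x y)
    (hB : ∀ x ∈ Q, ∀ y ∈ Q, x ∉ A → y ∉ A → G.Adj x y → D x y)
    (hAB : ∀ x ∈ Q, ∀ y ∈ Q, G.Adj x y → D x y ∨ D y x) :
    ∃ x ∈ Q, k ≤ (Finset.univ.filter fun y => G.Adj x y ∧ (y ∈ Q → D x y)).card := by
  by_contra! hlt
  obtain ⟨c₀, hc₀, hp₀⟩ := hG.exists_outside hQ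
  obtain ⟨c₁, hc₁, hp₁⟩ := exists_list_coloring G A D Q hA hB hAB
    (fun x => Finset.range k \ (Finset.univ.filter fun y => G.Adj x y ∧ y ∉ Q).image c₀) (by
      intro x hx
      have h1 := hlt x hx
      have h2 : (Finset.univ.filter fun y => G.Adj x y ∧ (y ∈ Q → D x y)).card =
          (Q.filter fun y => G.Adj x y ∧ D x y).card +
          (Finset.univ.filter fun y => G.Adj x y ∧ y ∉ Q).card := by
        rw [← Finset.card_union_of_disjoint]
        · congr 1
          ext y
          simp only [Finset.mem_filter, Finset.mem_union, Finset.mem_univ, true_and]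
          tauto
        · rw [Finset.disjoint_left]
          intro y hy hy'
          exact (Finset.mem_filter.1 hy').2.2 (Finset.mem_filter.1 hy).1
      have h3 : ((Finset.univ.filter fun y => G.Adj x y ∧ y ∉ Q).image c₀).card ≤
        (Finset.univ.filter fun y => G.Adj x y ∧ y ∉ Q).card := Finset.card_image_le
      have h4 := Finset.le_card_sdiff
        ((Finset.univ.filter fun y => G.Adj x y ∧ y ∉ Q).image c₀) (Finset.range k)
      rw [Finset.card_range] at h4
      omega)
  have hin : ∀ x ∈ Q, c₁ x < k := fun x hx =>
    Finset.mem_range.1 (Finset.mem_sdiff.1 (hc₁ x hx)).1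
  have hio : ∀ x ∈ Q, ∀ y ∉ Q, G.Adj x y → c₁ x ≠ c₀ y := fun x hx y hy hadj e =>
    (Finset.mem_sdiff.1 (hc₁ x hx)).2 (e ▸ Finset.mem_image_of_mem c₀ (by simp [hadj, hy]))
  refine hG.not_colorable ⟨SimpleGraph.Coloring.mk
    (fun x => (⟨if x ∈ Q then c₁ x else c₀ x, ?_⟩ : Fin k)) ?_⟩
  · split_ifs with h
    · exact hin x h
    · exact hc₀ x h
  · intro x y hadj e
    rw [Fin.mk.injEq] at e
    split_ifs at e with h1 h2 h2
    · exact hp₁ x h1 y h2 hadj e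
    · exact hio x h1 y h2 hadj e
    · exact hio y h2 x h1 hadj.symm e.symm
    · exact hp₀ x h1 y h2 hadj e

theorem CCritical.le_degree {V : Type} [Fintype V] {G : SimpleGraph V} {k : ℕ}
    (hG : CCritical (k + 1) G) (v : V) : k ≤ G.degree v := by
  obtain ⟨x, hx, h⟩ := hG.exists_outdegree {v} (fun _ _ => False) {v} (by simp)
    (by simp) (by simp) (by simp)
  rw [Finset.mem_singleton] at hx
  subst hx
  rw [← SimpleGraph.card_neighborFinset_eq_degree]
  refine h.trans (Finset.card_le_card fun y hy => ?_)
  simp only [Finset.mem_filter] at hy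
  simpa using hy.2.1


/-- The edges of `G` between vertices of degree `k`. It is a graph on all of `V`, in which the other
vertices are isolated. -/
def lowGraph {V : Type} [Fintype V] (G : SimpleGraph V) (k : ℕ) : SimpleGraph V where
  Adj x y := G.Adj x y ∧ G.degree x = k ∧ G.degree y = k
  symm := ⟨fun _ _ h => ⟨h.1.symm, h.2.2, h.2.1⟩⟩
  loopless := ⟨fun _ h => G.loopless.irrefl _ h.1⟩

/-- Suppose the even positions of an even cycle of low vertices are independent. With all edges
among its vertices directed both ways, except for the deleted arcs from each vertex to its successor,
every vertex has fewer than `k` neighbours that are outside the cycle or out-neighbours, against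
`CCritical.exists_outdegree`. -/
theorem CCritical.altEven {V : Type} [Fintype V] {G : SimpleGraph V} {k : ℕ}
    (hG : CCritical (k + 1) G) : AltEven (lowGraph G k) := by
  intro n f hC hn
  by_contra! hno
  have h3 := hC.three_le
  -- the successor map on positions
  set s : ℕ → ℕ := fun i => if i + 1 = n then 0 else i + 1 with hs
  have hsn : ∀ i, i < n → s i < n := by
    intro i hi
    simp only [hs]
    split_ifs <;> omega
  have hsp : ∀ i, i < n → (Even (s i) ↔ ¬ Even i) := by
    intro i hi
    simp only [hs]
    split_ifs with h
    · subst h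
      simpa [Nat.even_add_one] using hn
    · exact Nat.even_add_one
  -- as `n ≥ 3`, no edge loses both of its directions
  have hss : ∀ i, i < n → s (s i) ≠ i := by
    intro i hi
    simp only [hs]
    split_ifs <;> omega
  have hsa : ∀ i, i < n → (lowGraph G k).Adj (f i) (f (s i)) := by
    intro i hi
    simp only [hs]
    split_ifs with h
    · have := hC.close
      rwa [show n - 1 = i by omega] at this
    · exact hC.adj i (by omega)
  have hlow : ∀ i, i < n → G.degree (f i) = k := fun i hi => (hsa i hi).2.1
  have hE : ∀ i < n, ∀ j < n, Even i → Even j → ¬ G.Adj (f i) (f j) := by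
    intro i hi j hj hi2 hj2 hadj
    rcases lt_trichotomy i j with h | h | h
    · exact hno i j h hj hi2 hj2 ⟨hadj, hlow i hi, hlow j hj⟩
    · exact G.loopless.irrefl _ (h ▸ hadj)
    · exact hno j i h hi hj2 hi2 ⟨hadj.symm, hlow j hj, hlow i hi⟩
  obtain ⟨x, hx, hd⟩ := hG.exists_outdegree (fun v => ∃ i < n, Even i ∧ v = f i)
    (fun x y => ¬ ∃ i < n, x = f i ∧ y = f (s i)) ((Finset.range n).image f)
    ⟨f 0, Finset.mem_image_of_mem f (Finset.mem_range.2 (by omega))⟩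
    (by
      rintro x - y - ⟨i, hi, hi2, rfl⟩ ⟨j, hj, hj2, rfl⟩
      exact hE i hi j hj hi2 hj2)
    (by
      rintro x - y - hx hy - ⟨i, hi, rfl, rfl⟩
      by_cases h : Even i
      · exact hx ⟨i, hi, h, rfl⟩
      · exact hy ⟨s i, hsn i hi, (hsp i hi).2 h, rfl⟩)
    (by
      rintro x - y - -
      by_contra! h
      obtain ⟨⟨i, hi, rfl, rfl⟩, j, hj, h1, h2⟩ := h
      have e1 := hC.inj _ _ (hsn i hi) hj h1
      have e2 := hC.inj _ _ hi (hsn j hj) h2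
      exact hss i hi (by rw [e1, ← e2]))
  obtain ⟨i, hi, rfl⟩ := Finset.mem_image.1 hx
  rw [Finset.mem_range] at hi
  refine absurd hd (not_le.2 ?_)
  rw [← hlow i hi, ← SimpleGraph.card_neighborFinset_eq_degree]
  refine Finset.card_lt_card (Finset.ssubset_iff_of_subset ?_ |>.2 ?_)
  · intro y hy
    simp only [Finset.mem_filter] at hy
    simpa using hy.2.1
  · refine ⟨f (s i), by simpa using (hsa i hi).1, fun h => ?_⟩
    simp only [Finset.mem_filter] at h
    exact h.2.2 (Finset.mem_image_of_mem f (Finset.mem_range.2 (hsn i hi))) ⟨i, hi, rfl, rfl⟩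

/-- A critical graph other than `K_{k+1}` has no clique on `k + 1` vertices, since such a clique
would be a proper subgraph that is not `k`-colourable. -/
theorem CCritical.card_clique_le {V : Type} [Fintype V] {G : SimpleGraph V} {k : ℕ}
    (hG : CCritical (k + 1) G) (hKc : ¬ Nonempty (G ≃g (⊤ : SimpleGraph (Fin (k + 1)))))
    (K : Finset V) (hK : G.IsClique (K : Set V)) : K.card ≤ k := by
  by_contra! hlt
  obtain ⟨Q, hQK, hQ⟩ := Finset.exists_subset_card_eq (show k + 1 ≤ K.card from hlt)
  have hQc : ∀ x ∈ Q, ∀ y ∈ Q, x ≠ y → G.Adj x y := fun x hx y hy hxy =>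
    hK (hQK hx) (hQK hy) hxy
  by_cases huniv : Q = Finset.univ
  · have hcard : Fintype.card V = k + 1 := by rw [← hQ, huniv, Finset.card_univ]
    refine hKc ⟨⟨Fintype.equivFinOfCardEq hcard, ?_⟩⟩
    intro x y
    rw [SimpleGraph.top_adj, (Fintype.equivFinOfCardEq hcard).injective.ne_iff]
    exact ⟨fun h => hQc x (huniv ▸ Finset.mem_univ x) y (huniv ▸ Finset.mem_univ y) h,
      fun h => h.ne⟩
  · obtain ⟨col, hcol, hp⟩ := hG.exists_outside (Q := Qᶜ)
      (by rwa [Finset.nonempty_iff_ne_empty, Ne, Finset.compl_eq_empty_iff])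
    simp only [Finset.mem_compl, not_not] at hcol hp
    obtain ⟨x, hx, y, hy, hxy, e⟩ := Finset.exists_ne_map_eq_of_card_lt_of_maps_to
      (s := Q) (t := Finset.range k) (by simp [hQ]) (f := col)
      (fun x hx => Finset.mem_coe.2 (Finset.mem_range.2 (hcol x hx)))
    exact hp x hx y hy (hQc x hx y hy hxy) e

/-! ### Counting edges -/

/-- The final computation, for `l` low vertices, `h` high vertices and the degree sum `D` of the high
vertices. With `S = D - k * h` the hypotheses give `h ≤ S` and `(k - 2) * l ≤ k * (S + k * h)`, so
`(k - 2) * (l + h) ≤ S * (k ^ 2 + 2 * k - 2)`. -/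
theorem gallai_arith {k l h D n : ℚ} (hk : 3 ≤ k) (hn : n = l + h) (h1 : (k + 1) * h ≤ D)
    (h2 : (1 - 2 / k) * l ≤ D) :
    (k + (k - 2) / ((k + 1) ^ 2 - 3)) * n ≤ k * l + D := by
  have hk0 : (0 : ℚ) < k := by linarith
  have hden : (0 : ℚ) < (k + 1) ^ 2 - 3 := by nlinarith
  have h2' : (k - 2) * l ≤ k * D := by
    have := mul_le_mul_of_nonneg_left h2 hk0.le
    have e : k * ((1 - 2 / k) * l) = (k - 2) * l := by field_simp
    linarith
  have key : (k - 2) * (l + h) ≤ (D - k * h) * ((k + 1) ^ 2 - 3) := by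
    nlinarith [mul_nonneg (by nlinarith : (0 : ℚ) ≤ k ^ 2 + k - 2) (by linarith : 0 ≤ D - (k + 1) * h)]
  have : (k - 2) / ((k + 1) ^ 2 - 3) * n ≤ D - k * h := by
    rw [div_mul_eq_mul_div, div_le_iff₀ hden, hn]
    exact key
  rw [hn] at this ⊢
  linarith

/-- The density bound for `c = k + 1`, with `2|E(G)|` written as the sum of the degrees. -/
theorem CCritical.density {V : Type} [Fintype V] {G : SimpleGraph V} {k : ℕ} (hk : 2 ≤ k)
    (hG : CCritical (k + 1) G) (hKc : ¬ Nonempty (G ≃g (⊤ : SimpleGraph (Fin (k + 1))))) :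
    ((k : ℚ) + ((k : ℚ) - 2) / (((k : ℚ) + 1) ^ 2 - 3)) * Fintype.card V
      ≤ ((∑ x, G.degree x : ℕ) : ℚ) := by
  have hmin := hG.le_degree
  rcases hk.eq_or_lt with rfl | hk3
  -- for `k = 2` the minimum degree suffices
  · have : Fintype.card V * 2 ≤ ∑ x, G.degree x := by
      simpa using Finset.sum_le_sum fun x (_ : x ∈ Finset.univ) => hmin x
    have : ((Fintype.card V : ℚ)) * 2 ≤ ((∑ x, G.degree x : ℕ) : ℚ) := by exact_mod_cast this
    push_cast at this ⊢
    linarith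
  set T := lowGraph G k with hT
  set L := Finset.univ.filter fun x => G.degree x = k with hL
  have hmem : ∀ x, x ∈ L ↔ G.degree x = k := fun x => by simp [hL]
  have hTdeg : ∀ x, T.degree x ≤ k := by
    intro x
    by_cases hx : G.degree x = k
    · rw [← hx]
      exact SimpleGraph.degree_le_of_le fun _ _ h => h.1
    · rw [← SimpleGraph.card_neighborFinset_eq_degree, Finset.card_eq_zero.2]
      · exact Nat.zero_le _
      · ext y
        simp only [SimpleGraph.mem_neighborFinset, Finset.notMem_empty, iff_false]
        exact fun h => hx h.2.1
  have hTL := hG.altEven.sum_adj_le hk3 hTdeg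
    (fun K hK => hG.card_clique_le hKc K fun x hx y hy hxy => (hK hx hy hxy).1) L
  have hdegsum : ∀ x, (G.degree x : ℚ) = ∑ y, if G.Adj x y then (1 : ℚ) else 0 := by
    intro x
    rw [← SimpleGraph.card_neighborFinset_eq_degree, Finset.sum_boole]
    congr 2
    ext y
    simp
  -- edges leaving `L`, counted from both sides
  have hcross : ∑ x ∈ L, ∑ y ∈ Lᶜ, (if G.Adj x y then (1 : ℚ) else 0) ≤
      ∑ y ∈ Lᶜ, (G.degree y : ℚ) := by
    rw [Finset.sum_comm]
    refine Finset.sum_le_sum fun y _ => ?_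
    rw [hdegsum]
    simp only [G.adj_comm y]
    exact Finset.sum_le_sum_of_subset_of_nonneg (Finset.subset_univ _)
      fun x _ _ => by split_ifs <;> norm_num
  have hLdeg : ∑ x ∈ L, (G.degree x : ℚ) = k * L.card := by
    rw [Finset.sum_congr rfl fun x hx => by rw [(hmem x).1 hx], Finset.sum_const, nsmul_eq_mul,
      mul_comm]
  have hsplit : ∑ x ∈ L, (G.degree x : ℚ) =
      ∑ x ∈ L, ∑ y ∈ L, (if T.Adj x y then (1 : ℚ) else 0) +
      ∑ x ∈ L, ∑ y ∈ Lᶜ, (if G.Adj x y then (1 : ℚ) else 0) := by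
    rw [← Finset.sum_add_distrib]
    refine Finset.sum_congr rfl fun x hx => ?_
    rw [hdegsum, ← Finset.sum_add_sum_compl L]
    congr 1
    refine Finset.sum_congr rfl fun y hy => if_congr ?_ rfl rfl
    exact ⟨fun h => ⟨h, (hmem x).1 hx, (hmem y).1 hy⟩, fun h => h.1⟩
  have hhigh : ((k : ℚ) + 1) * Lᶜ.card ≤ ∑ y ∈ Lᶜ, (G.degree y : ℚ) := by
    rw [mul_comm, ← nsmul_eq_mul, ← Finset.sum_const]
    refine Finset.sum_le_sum fun y hy => ?_
    rw [Finset.mem_compl, hmem] at hy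
    have := hmin y
    have : k + 1 ≤ G.degree y := by omega
    exact_mod_cast this
  have hcard : (Fintype.card V : ℚ) = L.card + Lᶜ.card := by
    exact_mod_cast (Finset.card_add_card_compl L).symm
  have hk3' : (3 : ℚ) ≤ k := by exact_mod_cast hk3
  refine (gallai_arith (D := ∑ y ∈ Lᶜ, (G.degree y : ℚ)) hk3' hcard hhigh ?_).trans (le_of_eq ?_)
  · linarith
  · rw [← hLdeg, Finset.sum_add_sum_compl]
    push_cast
    rfl

/-- Gallai: for `c ≥ 3`, every `c`-critical graph other than `K_c` has average degree at least
`c − 1 + (c − 3)/(c² − 3)`, i.e. `2|E(G)| ≥ (c − 1 + (c − 3)/(c² − 3))·|V(G)|`. -/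
theorem gallai_critical_density (c : ℕ) (hc : 3 ≤ c) (V : Type) [Fintype V] [DecidableEq V]
    (G : SimpleGraph V) (hcrit : CCritical c G)
    (hKc : ¬ Nonempty (G ≃g (⊤ : SimpleGraph (Fin c)))) :
    ((c : ℚ) - 1 + ((c : ℚ) - 3) / ((c : ℚ) ^ 2 - 3)) * Fintype.card V
      ≤ 2 * Nat.card G.edgeSet := by
  obtain ⟨k, rfl⟩ : ∃ k, c = k + 1 := ⟨c - 1, by omega⟩
  have h := hcrit.density (by omega) hKc
  have he : ∑ x, G.degree x = 2 * Nat.card G.edgeSet := by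
    rw [SimpleGraph.sum_degrees_eq_twice_card_edges, Nat.card_eq_fintype_card,
      ← SimpleGraph.edgeFinset_card]
  rw [he] at h
  push_cast at h ⊢
  convert h using 3 <;> ring
end

section
/- Let A be an abelian group with |A| ≥ 6. Then every A-flow-critical graph is isomorphic to K₂. -/
/-!
An `A`-flow-critical graph `G` with an edge cut of size one or two is easily handled. For any edge
`xy`, criticality applied to the contraction of `xy` gives a zero-boundary flow of `G` that vanishes
at most on `xy` (`FlowCritical.exists_flow`). If `{e, e'}` is a cut, flows take opposite values on
`e` and `e'`, so contracting `e` gives a nowhere-zero flow, which is impossible. If `e` is a bridge,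
every flow vanishes on `e`, so no edge other than `e` exists, and `G` is `K₂`.

It remains to see that a connected graph whose cuts all have at least three edges has a
nowhere-zero flow as soon as `|A| ≥ 6`. This is Seymour's six-flow argument, in the group-valued
form of Jaeger, Linial, Payan and Tarsi. Choose `d ≠ 0` such that `B = {0, d, -d}` has fewer than
`|A| / 2` elements. Grow a vertex set `U` and an edge set `X` inside `U`, keeping two invariants:
`G \ X` is connected, and every zero-sum boundary on `U` is the boundary of a flow on `G[U]` that
avoids `B` off `X` (`Admissible`).

* For a component `K` of `G - U`, there is a connected subgraph of `K` that meets two edges between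
  `K` and `U` and whose edges can be deleted without disconnecting `K` (`exists_ear`). It is found by
  maximizing the part of `K` that stays connected; here all cuts need at least three edges.
* Adding this ear to `X` and its vertices to `U` keeps the invariants (`Admissible.step`). All new
  edges outside the ear get values outside `B`; since `2 * |B| < |A|`, the two edges to `U` can be
  given values outside `B` with any prescribed sum. The ear itself then corrects the boundary on its
  vertices, and the invariant for `U` corrects the rest.

When `U` is everything, there is a zero-boundary flow `f` avoiding `B` off `X`. Let `Z` be the set of
edges of `X` where `f` vanishes. As `G \ X` is connected, `Z` becomes an even edge set by adding
edges off `X`. Sending `d` along an Eulerian orientation of it (`exists_eulerian_flow`) removes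
the zeros on `Z` and creates none off `X`, where `f` avoids `d` and `-d` as well as `0`.
-/

open scoped Classical

section FlowDefs

variable {V : Type} [Fintype V] [DecidableEq V] {A : Type} [AddCommGroup A]

/-- `β` is an `A`-boundary for `G`: its values sum to zero on every connected component. -/
def IsBoundary (G : SimpleGraph V) (β : V → A) : Prop :=
  ∀ x : V, ∑ v ∈ Finset.univ.filter (fun v => G.Reachable v x), β v = 0

/-- `(G, β)` has a nowhere-zero flow: an antisymmetric function on ordered adjacent pairs,
never zero on edges, whose out-sum at each vertex `u` is `β u`. -/
def HasNZFlow (G : SimpleGraph V) (β : V → A) : Prop :=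
  ∃ f : V → V → A,
    (∀ u v, G.Adj u v → f u v = - f v u) ∧
    (∀ u v, G.Adj u v → f u v ≠ 0) ∧
    (∀ u : V, ∑ v ∈ Finset.univ.filter (fun v => G.Adj u v), f u v = β u)

/-- `(G, β)/P` has a nowhere-zero flow, where the partition `P` of `V(G)` is given as a setoid:
an antisymmetric, nowhere-zero function on the ordered adjacent pairs lying in distinct parts,
such that for every part, the sum of the values leaving the part is the sum of `β` on it. -/
def HasNZFlowQuot (G : SimpleGraph V) (β : V → A) (P : Setoid V) : Prop :=
  ∃ f : V → V → A,
    (∀ u v, G.Adj u v → ¬ P.r u v → f u v = - f v u) ∧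
    (∀ u v, G.Adj u v → ¬ P.r u v → f u v ≠ 0) ∧
    (∀ x : V,
      ∑ u ∈ Finset.univ.filter (fun u => P.r u x),
        ∑ v ∈ Finset.univ.filter (fun v => G.Adj u v ∧ ¬ P.r u v), f u v
      = ∑ v ∈ Finset.univ.filter (fun v => P.r v x), β v)

/-- The partition `P` is `G`-connected: every part induces a connected subgraph of `G`. -/
def PartsConnected (G : SimpleGraph V) (P : Setoid V) : Prop :=
  ∀ x : V, (G.induce {v | P.r v x}).Connected

/-- `(G, β)` is a flow-critical `A`-bordered graph: `β` is an `A`-boundary, `G` is connected,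
`(G, β)` has no nowhere-zero flow, but `(G, β)/P` has one for every `G`-connected partition `P`
with at least one part of size at least two. -/
def FlowCritical (G : SimpleGraph V) (β : V → A) : Prop :=
  IsBoundary G β ∧ G.Connected ∧ ¬ HasNZFlow G β ∧
  ∀ P : Setoid V, PartsConnected G P → (∃ x y : V, x ≠ y ∧ P.r x y) →
    HasNZFlowQuot G β P

end FlowDefs

set_option linter.unusedSectionVars false

/-! ### Flows with boundary -/

section Flows

variable {V : Type} [Fintype V] [DecidableEq V] {A : Type} [AddCommGroup A]

/-- `f` is an `A`-flow with boundary `β` supported on the edges of `H`. Unlike in `HasNZFlow`,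
`f` vanishes off the edges, so that boundaries are sums over all of `V`. -/
def IsFlowOn (H : SimpleGraph V) (β : V → A) (f : V → V → A) : Prop :=
  (∀ u v, f u v = - f v u) ∧ (∀ u v, ¬ H.Adj u v → f u v = 0) ∧ (∀ u, ∑ v, f u v = β u)

/-- The edges of `G` with both ends in `S`, as a graph on the whole vertex type. -/
def inside (G : SimpleGraph V) (S : Set V) : SimpleGraph V where
  Adj a b := G.Adj a b ∧ a ∈ S ∧ b ∈ S
  symm := ⟨fun _ _ h => ⟨h.1.symm, h.2.2, h.2.1⟩⟩
  loopless := ⟨fun _ h => h.1.ne rfl⟩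

lemma IsFlowOn.mono {H H' : SimpleGraph V} {β : V → A} {f : V → V → A} (h : IsFlowOn H β f)
    (hH : H ≤ H') : IsFlowOn H' β f :=
  ⟨h.1, fun u v huv => h.2.1 u v fun h' => huv (hH h'), h.2.2⟩

lemma IsFlowOn.add {H : SimpleGraph V} {β β' : V → A} {f f' : V → V → A}
    (h : IsFlowOn H β f) (h' : IsFlowOn H β' f') :
    IsFlowOn H (fun v => β v + β' v) (fun u v => f u v + f' u v) := by
  refine ⟨fun u v => ?_, fun u v huv => ?_, fun u => ?_⟩
  · simp only [h.1 u v, h'.1 u v]; abel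
  · simp only [h.2.1 u v huv, h'.2.1 u v huv, add_zero]
  · simp only [Finset.sum_add_distrib, h.2.2, h'.2.2]

lemma isFlowOn_zero (H : SimpleGraph V) : IsFlowOn H (fun _ => (0 : A)) (fun _ _ => 0) := by
  refine ⟨?_, ?_, ?_⟩ <;> simp

/-- The flow of value `c` along the single pair `(a, b)`. -/
def edgeFlow (a b : V) (c : A) (u v : V) : A :=
  (if u = a ∧ v = b then c else 0) - (if u = b ∧ v = a then c else 0)

lemma isFlowOn_edgeFlow {H : SimpleGraph V} {a b : V} (hab : H.Adj a b) (c : A) :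
    IsFlowOn H (fun v => (if v = a then c else 0) - (if v = b then c else 0))
      (edgeFlow a b c) := by
  refine ⟨fun u v => ?_, fun u v huv => ?_, fun u => ?_⟩
  · simp only [edgeFlow, neg_sub, and_comm]
  · have h1 : ¬ (u = a ∧ v = b) := by rintro ⟨rfl, rfl⟩; exact huv hab
    have h2 : ¬ (u = b ∧ v = a) := by rintro ⟨rfl, rfl⟩; exact huv hab.symm
    simp [edgeFlow, h1, h2]
  · simp only [edgeFlow, Finset.sum_sub_distrib, ite_and]
    congr 1 <;> split_ifs <;> simp

lemma exists_pathFlow {H : SimpleGraph V} {v r : V} (h : H.Reachable v r) (c : A) :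
    ∃ f, IsFlowOn H (fun x => (if x = v then c else 0) - (if x = r then c else 0)) f := by
  obtain ⟨w⟩ := h
  induction w with
  | nil => exact ⟨_, by simpa using isFlowOn_zero (A := A) H⟩
  | @cons u v r huv p ih =>
    obtain ⟨f, hf⟩ := ih
    have h := (isFlowOn_edgeFlow huv c).add hf
    simp only [sub_add_sub_cancel] at h
    exact ⟨_, h⟩

/-- Over any abelian group, every zero-sum boundary living on one connected piece is the boundary
of a flow. -/
lemma exists_flow_of_reachable (H : SimpleGraph V) (r : V) (β : V → A)
    (h : ∀ v, β v ≠ 0 → H.Reachable v r) (h0 : ∑ v, β v = 0) : ∃ f, IsFlowOn H β f := by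
  have key : ∀ v, ∃ f, IsFlowOn H
      (fun x => (if x = v then β v else 0) - (if x = r then β v else 0)) f := by
    intro v
    by_cases hv : β v = 0
    · exact ⟨_, by simpa [hv] using isFlowOn_zero (A := A) H⟩
    · exact exists_pathFlow (h v hv) _
  choose f hf using key
  refine ⟨fun u w => ∑ v, f v u w, fun u w => ?_, fun u w huw => ?_, fun u => ?_⟩
  · rw [← Finset.sum_neg_distrib]
    exact Finset.sum_congr rfl fun v _ => (hf v).1 u w
  · exact Finset.sum_eq_zero fun v _ => (hf v).2.1 u w huw
  · rw [Finset.sum_comm]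
    simp only [(hf _).2.2, Finset.sum_sub_distrib]
    by_cases hur : u = r <;> simp [hur, h0]

/-- A flow sends nothing out of `S` in total except what the boundary prescribes. Terms inside `S`
cancel in pairs; the vanishing diagonal is what makes this valid in characteristic two. -/
lemma IsFlowOn.cut {H : SimpleGraph V} {β : V → A} {f : V → V → A} (h : IsFlowOn H β f)
    (S : Set V) :
    ∑ p ∈ Finset.univ.filter (fun p : V × V => p.1 ∈ S ∧ p.2 ∉ S ∧ H.Adj p.1 p.2), f p.1 p.2
      = ∑ u ∈ Finset.univ.filter (fun u => u ∈ S), β u := by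
  have hin : ∑ p ∈ Finset.univ.filter (fun p : V × V => p.1 ∈ S ∧ p.2 ∈ S), f p.1 p.2 = 0 := by
    refine Finset.sum_involution (fun p _ => (p.2, p.1)) ?_ ?_ ?_ ?_
    · intro p _
      simp only [h.1 p.1 p.2]
      abel
    · rintro ⟨a, b⟩ _ hne heq
      simp only [Prod.mk.injEq] at heq
      obtain ⟨rfl, _⟩ := heq
      exact hne (h.2.1 _ _ (H.irrefl))
    · intro p hp
      simpa [and_comm] using hp
    · intro p _; rfl
  have hall : ∑ u ∈ Finset.univ.filter (fun u => u ∈ S), β u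
      = ∑ p ∈ Finset.univ.filter (fun p : V × V => p.1 ∈ S), f p.1 p.2 := by
    simp only [← h.2.2]
    rw [Finset.sum_filter, Finset.sum_filter, Fintype.sum_prod_type]
    refine Finset.sum_congr rfl fun u _ => ?_
    split_ifs <;> simp
  have hsplit : ∑ p ∈ Finset.univ.filter (fun p : V × V => p.1 ∈ S ∧ p.2 ∉ S), f p.1 p.2
      = ∑ p ∈ Finset.univ.filter (fun p : V × V => p.1 ∈ S ∧ p.2 ∉ S ∧ H.Adj p.1 p.2),
          f p.1 p.2 := by
    symm
    refine Finset.sum_subset ?_ ?_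
    · intro p hp
      simp only [Finset.mem_filter, Finset.mem_univ, true_and] at hp ⊢
      exact ⟨hp.1, hp.2.1⟩
    · intro p hp hp'
      simp only [Finset.mem_filter, Finset.mem_univ, true_and] at hp hp'
      exact h.2.1 _ _ fun hadj => hp' ⟨hp.1, hp.2, hadj⟩
  rw [hall, ← hsplit,
    ← Finset.sum_filter_add_sum_filter_not
      (Finset.univ.filter (fun p : V × V => p.1 ∈ S)) (fun p => p.2 ∈ S),
    Finset.filter_filter, Finset.filter_filter, hin, zero_add]

lemma IsFlowOn.sum_boundary {H : SimpleGraph V} {β : V → A} {f : V → V → A}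
    (h : IsFlowOn H β f) : ∑ u, β u = 0 := by
  simpa using (h.cut Set.univ).symm

end Flows

/-! ### Nonseparating ears -/

section Ears

variable {V : Type} [Fintype V] [DecidableEq V]

/-- The ordered pairs `(a, b)` adjacent in `G` with `a ∈ S` and `b ∉ S`: the edge cut of `S`. -/
noncomputable def cutPairs (G : SimpleGraph V) (S : Set V) : Finset (V × V) :=
  Finset.univ.filter (fun p : V × V => p.1 ∈ S ∧ p.2 ∉ S ∧ G.Adj p.1 p.2)

lemma mem_cutPairs {G : SimpleGraph V} {S : Set V} {p : V × V} :
    p ∈ cutPairs G S ↔ p.1 ∈ S ∧ p.2 ∉ S ∧ G.Adj p.1 p.2 := by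
  simp [cutPairs]

lemma exists_boundary_adj {H : SimpleGraph V} {x y : V} {S : Set V} (h : H.Reachable x y)
    (hx : x ∈ S) (hy : y ∉ S) : ∃ a b, H.Adj a b ∧ a ∈ S ∧ b ∉ S := by
  obtain ⟨w⟩ := h
  obtain ⟨d, _, h1, h2⟩ := w.exists_boundary_dart S hx hy
  exact ⟨d.fst, d.snd, d.adj, h1, h2⟩

/-- A set closed under taking neighbours is closed under reachability. -/
lemma mem_of_reachable {H : SimpleGraph V} {x y : V} {S : Set V} (h : H.Reachable x y)
    (hx : x ∈ S) (hS : ∀ a b, H.Adj a b → a ∈ S → b ∈ S) : y ∈ S := by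
  by_contra hy
  obtain ⟨a, b, hab, ha, hb⟩ := exists_boundary_adj h hx hy
  exact hb (hS a b hab ha)

lemma reachable_inside_component {H : SimpleGraph V} {x y : V} (h : H.Reachable x y) :
    (inside H {v | H.Reachable x v}).Reachable x y := by
  have : y ∈ {v | H.Reachable x v ∧ (inside H {v | H.Reachable x v}).Reachable x v} := by
    refine mem_of_reachable h ⟨.rfl, .rfl⟩ ?_
    rintro a b hab ⟨h1, h2⟩
    have h3 : H.Reachable x b := h1.trans hab.reachable
    have h4 : (inside H {v | H.Reachable x v}).Adj a b := ⟨hab, h1, h3⟩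
    exact ⟨h3, h2.trans h4.reachable⟩
  exact this.2

/-- `F` joins the inner ends of two different edges leaving `K`, while `L` stays connected after
deleting `F`. A candidate for an ear of `K` when `L = K`. -/
def EarCand (G : SimpleGraph V) (K L : Set V) (F : SimpleGraph V) : Prop :=
  F ≤ inside G K ∧
  (∃ p q : V × V, p ≠ q ∧ p ∈ cutPairs G K ∧ q ∈ cutPairs G K ∧ F.Reachable p.1 q.1) ∧
  ∀ a ∈ L, ∀ b ∈ L, (inside G L \ F).Reachable a b

lemma connected_insert {G : SimpleGraph V} {L : Set V} {F F' : SimpleGraph V} {s l : V}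
    (hL : ∀ a ∈ L, ∀ b ∈ L, (inside G L \ F).Reachable a b)
    (hF : ∀ a ∈ L, ∀ b ∈ L, F'.Adj a b → F.Adj a b)
    (hl : l ∈ L) (hsl : G.Adj s l) (hnot : ¬ F'.Adj s l) :
    ∀ a ∈ insert s L, ∀ b ∈ insert s L, (inside G (insert s L) \ F').Reachable a b := by
  have hle : inside G L \ F ≤ inside G (insert s L) \ F' := by
    rintro a b ⟨⟨h1, h2, h3⟩, h4⟩
    exact ⟨⟨h1, Or.inr h2, Or.inr h3⟩, fun h => h4 (hF a h2 b h3 h)⟩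
  have hadj : (inside G (insert s L) \ F').Adj s l := ⟨⟨hsl, Or.inl rfl, Or.inr hl⟩, hnot⟩
  have hto : ∀ a ∈ insert s L, (inside G (insert s L) \ F').Reachable a l := by
    rintro a (rfl | ha)
    · exact hadj.reachable
    · exact (hL a ha l hl).mono hle
  exact fun a ha b hb => (hto a ha).trans (hto b hb).symm

/-- If `w ∉ S` is joined to `S` in `F`, then `F` contains a route from `w` that avoids `S` up to
its final edge, which enters `S`. -/
lemma exists_hook {F : SimpleGraph V} {S : Set V} {w z : V} (hw : w ∉ S) (hz : z ∈ S)
    (h : F.Reachable w z) :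
    ∃ s l, s ∈ S ∧ l ∉ S ∧ F.Adj s l ∧ (inside F Sᶜ).Reachable w l := by
  have hC : ∀ v, (inside F Sᶜ).Reachable w v → v ∉ S := fun v hv =>
    mem_of_reachable (S := Sᶜ) hv hw fun a b hab _ => hab.2.2
  obtain ⟨a, b, hab, ha, hb⟩ := exists_boundary_adj (S := {v | (inside F Sᶜ).Reachable w v}) h
    (SimpleGraph.Reachable.refl _) (fun hz' => hC z hz' hz)
  refine ⟨b, a, ?_, hC a ha, hab.symm, ha⟩
  by_contra hbS
  have h4 : (inside F Sᶜ).Adj a b := ⟨hab, hC a ha, hbS⟩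
  exact hb (SimpleGraph.Reachable.trans ha h4.reachable)

/-- The connected set `L` of an ear candidate can be enlarged as long as it is not all of `K`.
For a component `S` of `K \ L`, the cut of `S` consists of edges to `L` and edges leaving `K`.
Rerouting `F` through `S` uses at most `2 - t` of the edges between `S` and `L`, where `t ≤ 2` is
the number of edges leaving `K` used at `S`; as the cut has at least three edges, one edge
between `S` and `L` becomes free. -/
lemma EarCand.improve {G : SimpleGraph V} {K L : Set V} {F : SimpleGraph V}
    (hcut : ∀ S : Set V, S.Nonempty → S ⊆ K → 3 ≤ (cutPairs G S).card)
    (hconn : ∀ a ∈ K, ∀ b ∈ K, (inside G K).Reachable a b)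
    (hLK : L ⊆ K) (hL0 : L.Nonempty) (hne : L ≠ K) (hF : EarCand G K L F) :
    ∃ s ∈ K, s ∉ L ∧ ∃ F', EarCand G K (insert s L) F' := by
  obtain ⟨hFK, ⟨p, q, hpq, hp, hq, hreach⟩, hLc⟩ := hF
  obtain ⟨x, hxK, hxL⟩ : ∃ x ∈ K, x ∉ L := by
    by_contra! hcon
    exact hne (hLK.antisymm hcon)
  set S : Set V := {v | (inside G (K \ L)).Reachable x v} with hS
  have hxS : x ∈ S := SimpleGraph.Reachable.refl _
  have hSsub : ∀ v ∈ S, v ∈ K ∧ v ∉ L := fun v hv =>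
    mem_of_reachable (S := K \ L) hv ⟨hxK, hxL⟩ fun a b hab _ => hab.2.2
  have hSout : ∀ a b, G.Adj a b → a ∈ S → b ∉ S → b ∈ K → b ∈ L := by
    intro a b hab ha hb hbK
    by_contra hbL
    have h4 : (inside G (K \ L)).Adj a b := ⟨hab, hSsub a ha, hbK, hbL⟩
    exact hb (SimpleGraph.Reachable.trans ha h4.reachable)
  have hSconn : ∀ a ∈ S, ∀ b ∈ S, (inside G S).Reachable a b := by
    have hle : inside (inside G (K \ L)) S ≤ inside G S := fun a b h => ⟨h.1.1, h.2⟩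
    have h1 : ∀ a ∈ S, (inside G S).Reachable x a := fun a ha =>
      (reachable_inside_component ha).mono hle
    exact fun a ha b hb => (h1 a ha).symm.trans (h1 b hb)
  set T := (cutPairs G S).filter (fun p => p.2 ∉ K) with hT
  set R := (cutPairs G S).filter (fun p => p.2 ∈ K) with hR
  have hTR : 3 ≤ R.card + T.card := by
    rw [hR, hT, Finset.card_filter_add_card_filter_not]
    exact hcut S ⟨x, hxS⟩ fun v hv => (hSsub v hv).1
  have hTmem : ∀ t, t ∈ T ↔ t.1 ∈ S ∧ t ∈ cutPairs G K := by
    intro t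
    simp only [hT, Finset.mem_filter, mem_cutPairs]
    constructor
    · rintro ⟨⟨h1, h2, h3⟩, h4⟩
      exact ⟨h1, (hSsub _ h1).1, h4, h3⟩
    · rintro ⟨h1, h2, h3, h4⟩
      exact ⟨⟨h1, fun h => h3 (hSsub _ h).1, h4⟩, h3⟩
  have hRmem : ∀ t, t ∈ R ↔ t.1 ∈ S ∧ t.2 ∈ L ∧ G.Adj t.1 t.2 := by
    intro t
    simp only [hR, Finset.mem_filter, mem_cutPairs]
    constructor
    · rintro ⟨⟨h1, h2, h3⟩, h4⟩
      exact ⟨h1, hSout _ _ h3 h1 h2 h4, h3⟩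
    · rintro ⟨h1, h2, h3⟩
      exact ⟨⟨h1, fun h => (hSsub _ h).2 h2, h3⟩, hLK h2⟩
  -- It suffices to free one edge between `S` and `L`, using no new edge inside `L`.
  suffices hmain : ∃ F' : SimpleGraph V, F' ≤ inside G K ∧
      (∃ p q : V × V, p ≠ q ∧ p ∈ cutPairs G K ∧ q ∈ cutPairs G K ∧ F'.Reachable p.1 q.1) ∧
      (∀ a ∈ L, ∀ b ∈ L, F'.Adj a b → F.Adj a b) ∧ ∃ t ∈ R, ¬ F'.Adj t.1 t.2 by
    obtain ⟨F', h1, h2, h3, t, ht, h4⟩ := hmain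
    rw [hRmem] at ht
    exact ⟨t.1, (hSsub _ ht.1).1, (hSsub _ ht.1).2, F', h1, h2,
      connected_insert hLc h3 ht.2.1 ht.2.2 h4⟩
  have hSK : inside G S ≤ inside G K := fun a b h =>
    ⟨h.1, (hSsub _ h.2.1).1, (hSsub _ h.2.2).1⟩
  by_cases hT2 : 1 < T.card
  · obtain ⟨t, ht, t', ht', htt⟩ := Finset.one_lt_card.1 hT2
    rw [hTmem] at ht ht'
    refine ⟨inside G S, hSK, ⟨t, t', htt, ht.2, ht'.2, hSconn _ ht.1 _ ht'.1⟩, ?_, ?_⟩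
    · intro a ha b _ hab
      exact absurd ha (hSsub _ hab.2.1).2
    · obtain ⟨l, hl⟩ := hL0
      obtain ⟨a, b, hab, ha, hb⟩ := exists_boundary_adj (hconn x hxK l (hLK hl)) hxS
        (fun h => (hSsub _ h).2 hl)
      exact ⟨(a, b), (hRmem _).2 ⟨ha, hSout a b hab.1 ha hb hab.2.2, hab.1⟩, fun h => hb h.2.2⟩
  by_cases hmeet : ∃ z ∈ S, F.Reachable p.1 z
  swap
  · -- The part of `F` in use misses `S`, so all edges between `S` and `L` can be freed.
    push Not at hmeet
    refine ⟨inside F {v | F.Reachable p.1 v}, fun a b h => hFK h.1,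
      ⟨p, q, hpq, hp, hq, reachable_inside_component hreach⟩, fun a _ b _ h => h.1, ?_⟩
    obtain ⟨t, ht⟩ : R.Nonempty := by rw [← Finset.card_pos]; omega
    exact ⟨t, ht, fun h => hmeet _ ((hRmem _).1 ht).1 h.2.1⟩
  obtain ⟨z, hzS, hpz⟩ := hmeet
  have hqz : F.Reachable q.1 z := hreach.symm.trans hpz
  have hookR : ∀ s l, s ∈ S → l ∉ S → F.Adj s l → (s, l) ∈ R := fun s l hs hl h =>
    (hRmem _).2 ⟨hs, hSout s l (hFK h).1 hs hl (hFK h).2.2, (hFK h).1⟩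
  -- Rerouting through all of `S`, entering it by the two hooks `e₁`, `e₂`.
  have reroute : ∀ e₁ ∈ R, ∀ e₂ ∈ R, F.Adj e₁.1 e₁.2 → F.Adj e₂.1 e₂.2 →
      (∃ t ∈ R, t ≠ e₁ ∧ t ≠ e₂) →
      (∀ F' : SimpleGraph V, inside G S ≤ F' → inside F Sᶜ ≤ F' → F'.Adj e₁.1 e₁.2 →
        F'.Adj e₂.1 e₂.2 → ∃ p q : V × V, p ≠ q ∧ p ∈ cutPairs G K ∧ q ∈ cutPairs G K ∧
          F'.Reachable p.1 q.1) →
      ∃ F' : SimpleGraph V, F' ≤ inside G K ∧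
      (∃ p q : V × V, p ≠ q ∧ p ∈ cutPairs G K ∧ q ∈ cutPairs G K ∧ F'.Reachable p.1 q.1) ∧
      (∀ a ∈ L, ∀ b ∈ L, F'.Adj a b → F.Adj a b) ∧ ∃ t ∈ R, ¬ F'.Adj t.1 t.2 := by
    rintro ⟨s₁, l₁⟩ he₁ ⟨s₂, l₂⟩ he₂ hF₁ hF₂ ⟨⟨s, l⟩, ht, ht₁, ht₂⟩ hconn'
    rw [hRmem] at he₁ he₂
    refine ⟨inside G S ⊔ inside F Sᶜ ⊔ SimpleGraph.edge s₁ l₁ ⊔ SimpleGraph.edge s₂ l₂,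
      ?_, hconn' _ ?_ ?_ ?_ ?_, ?_, (s, l), ht, ?_⟩
    · refine sup_le (sup_le (sup_le hSK fun a b h => hFK h.1) ?_) ?_
      · rw [SimpleGraph.edge_le_iff]; exact Or.inr (hFK hF₁)
      · rw [SimpleGraph.edge_le_iff]; exact Or.inr (hFK hF₂)
    · exact le_sup_left.trans (le_sup_left.trans le_sup_left)
    · exact le_sup_right.trans (le_sup_left.trans le_sup_left)
    · refine Or.inl (Or.inr ?_)
      rw [SimpleGraph.edge_adj]; exact ⟨Or.inl ⟨rfl, rfl⟩, hF₁.ne⟩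
    · refine Or.inr ?_
      rw [SimpleGraph.edge_adj]; exact ⟨Or.inl ⟨rfl, rfl⟩, hF₂.ne⟩
    · rintro a ha b hb (((h | h) | h) | h)
      · exact absurd ha (hSsub _ h.2.1).2
      · exact h.1
      · rw [SimpleGraph.edge_adj] at h
        rcases h.1 with ⟨rfl, rfl⟩ | ⟨rfl, rfl⟩
        · exact hF₁
        · exact hF₁.symm
      · rw [SimpleGraph.edge_adj] at h
        rcases h.1 with ⟨rfl, rfl⟩ | ⟨rfl, rfl⟩
        · exact hF₂
        · exact hF₂.symm
    · rw [hRmem] at ht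
      have hlS : ∀ v ∈ L, v ∉ S := fun v hv h => (hSsub v h).2 hv
      rintro (((h | h) | h) | h)
      · exact hlS _ ht.2.1 h.2.2
      · exact h.2.1 ht.1
      · rw [SimpleGraph.edge_adj] at h
        rcases h.1 with ⟨h1, h2⟩ | ⟨h1, h2⟩
        · exact ht₁ (Prod.ext h1 h2)
        · exact hlS _ he₁.2.1 (h1 ▸ ht.1)
      · rw [SimpleGraph.edge_adj] at h
        rcases h.1 with ⟨h1, h2⟩ | ⟨h1, h2⟩
        · exact ht₂ (Prod.ext h1 h2)
        · exact hlS _ he₂.2.1 (h1 ▸ ht.1)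
  rcases Nat.eq_zero_or_pos T.card with hT0 | hTpos
  · have hTe : ∀ t, t ∉ T := by
      intro t ht
      rw [Finset.card_eq_zero] at hT0
      simp [hT0] at ht
    have hpS : p.1 ∉ S := fun h => hTe p ((hTmem p).2 ⟨h, hp⟩)
    have hqS : q.1 ∉ S := fun h => hTe q ((hTmem q).2 ⟨h, hq⟩)
    obtain ⟨s₁, l₁, hs₁, hl₁, ha₁, hr₁⟩ := exists_hook hpS hzS hpz
    obtain ⟨s₂, l₂, hs₂, hl₂, ha₂, hr₂⟩ := exists_hook hqS hzS hqz
    refine reroute (s₁, l₁) (hookR _ _ hs₁ hl₁ ha₁) (s₂, l₂) (hookR _ _ hs₂ hl₂ ha₂) ha₁ ha₂ ?_ ?_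
    · by_contra! hcon
      have hsub : R ⊆ {(s₁, l₁), (s₂, l₂)} := by
        intro t ht
        by_cases h : t = (s₁, l₁)
        · simp [h]
        · simp [hcon t ht h]
      have := (Finset.card_le_card hsub).trans Finset.card_le_two
      omega
    · intro F' h1 h2 h3 h4
      refine ⟨p, q, hpq, hp, hq, ?_⟩
      exact (((hr₁.mono h2).trans h3.symm.reachable).trans
        ((hSconn s₁ hs₁ s₂ hs₂).mono h1)).trans (h4.reachable.trans (hr₂.mono h2).symm)
  · obtain ⟨t, ht⟩ := Finset.card_pos.1 hTpos
    have huniq : ∀ t' ∈ T, t' = t := fun t' ht' =>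
      Finset.card_le_one.1 (not_lt.1 hT2) t' ht' t ht
    have ht2 := (hTmem t).1 ht
    obtain ⟨w, hw, hwt, hwz⟩ : ∃ w ∈ cutPairs G K, w ≠ t ∧ F.Reachable w.1 z := by
      by_cases h : p = t
      · exact ⟨q, hq, fun h' => hpq (h.trans h'.symm), hqz⟩
      · exact ⟨p, hp, h, hpz⟩
    have hwS : w.1 ∉ S := fun h => hwt (huniq w ((hTmem w).2 ⟨h, hw⟩))
    obtain ⟨s₁, l₁, hs₁, hl₁, ha₁, hr₁⟩ := exists_hook hwS hzS hwz
    have hR1 := hookR _ _ hs₁ hl₁ ha₁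
    refine reroute (s₁, l₁) hR1 (s₁, l₁) hR1 ha₁ ha₁ ?_ ?_
    · by_contra! hcon
      have hsub : R ⊆ {(s₁, l₁)} := by
        intro t' ht'
        by_cases h : t' = (s₁, l₁)
        · simp [h]
        · exact absurd (hcon t' ht' h) h
      have := Finset.card_le_card hsub
      rw [Finset.card_singleton] at this
      omega
    · intro F' h1 h2 h3 _
      exact ⟨w, t, hwt, hw, ht2.2, ((hr₁.mono h2).trans h3.symm.reachable).trans
        ((hSconn s₁ hs₁ _ ht2.1).mono h1)⟩

/-- Existence of nonseparating ears: inside a connected set `K` all of whose nonempty subsets have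
at least three outgoing edges, some subgraph joins two edges leaving `K` and can be deleted
without disconnecting `K`. -/
lemma exists_ear {G : SimpleGraph V} {K : Set V} (hK : K.Nonempty)
    (hcut : ∀ S : Set V, S.Nonempty → S ⊆ K → 3 ≤ (cutPairs G S).card)
    (hconn : ∀ a ∈ K, ∀ b ∈ K, (inside G K).Reachable a b) :
    ∃ F, EarCand G K K F := by
  have key : ∀ n, ∀ L : Set V, L ⊆ K → L.Nonempty → (K \ L).ncard = n →
      (∃ F, EarCand G K L F) → ∃ F, EarCand G K K F := by
    intro n
    induction n using Nat.strong_induction_on with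
    | _ n ih =>
      rintro L hLK hL0 hn ⟨F, hF⟩
      by_cases hne : L = K
      · subst hne; exact ⟨F, hF⟩
      obtain ⟨s, hsK, hsL, F', hF'⟩ := hF.improve hcut hconn hLK hL0 hne
      refine ih _ ?_ (insert s L) (Set.insert_subset hsK hLK) (Set.insert_nonempty _ _) rfl ⟨F', hF'⟩
      rw [← hn]
      refine Set.ncard_lt_ncard ⟨?_, ?_⟩ (Set.toFinite _)
      · exact Set.sdiff_subset_sdiff_right (Set.subset_insert _ _)
      · exact fun h => (h ⟨hsK, hsL⟩).2 (Or.inl rfl)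
  obtain ⟨r, hr⟩ := hK
  refine key _ {r} (by simpa using hr) (by simp) rfl ⟨inside G K, le_rfl, ?_, ?_⟩
  · have h3 := hcut K ⟨r, hr⟩ subset_rfl
    obtain ⟨p, hp, q, hq, hpq⟩ := Finset.one_lt_card.1 (show 1 < (cutPairs G K).card by omega)
    exact ⟨p, q, hpq, hp, hq, hconn _ (mem_cutPairs.1 hp).1 _ (mem_cutPairs.1 hq).1⟩
  · rintro a rfl b rfl
    exact SimpleGraph.Reachable.refl _

end Ears

/-! ### Growing by ears -/

section Growth

variable {V : Type} [Fintype V] [DecidableEq V] {A : Type} [AddCommGroup A]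

/-- Every zero-sum boundary on `U` is the boundary of a flow in `G[U]` whose values avoid `B` on all
edges outside `X`. -/
def Admissible (G X : SimpleGraph V) (B : Finset A) (U : Set V) : Prop :=
  ∀ β : V → A, (∀ v, v ∉ U → β v = 0) → ∑ v, β v = 0 →
    ∃ f, IsFlowOn (inside G U) β f ∧
      ∀ u v, u ∈ U → v ∈ U → G.Adj u v → ¬ X.Adj u v → f u v ∉ B

lemma edgeFlow_eq_zero {a b u v : V} {c : A} (h1 : ¬ (u = a ∧ v = b)) (h2 : ¬ (u = b ∧ v = a)) :
    edgeFlow a b c u v = 0 := by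
  simp [edgeFlow, h1, h2]

set_option maxHeartbeats 800000 in
/-- Adding an ear. The values on all new edges outside `F` are chosen outside `B`: they are fixed
arbitrarily except on the two edges `(a₁, u₁)` and `(a₂, u₂)`, whose values have a prescribed sum
and are available because `2 * |B| < |A|`. The connected graph `F` then corrects the boundary
on `Q`, and what is left is a zero-sum boundary on `U`. -/
lemma Admissible.step [Fintype A] {G X F : SimpleGraph V} {B : Finset A} {U Q : Set V}
    (hneg : ∀ x ∈ B, -x ∈ B) (hcard : 2 * B.card < Fintype.card A)
    (hF : ∀ u v, F.Adj u v → G.Adj u v ∧ u ∈ Q ∧ v ∈ Q)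
    {r : V} (hconn : ∀ v ∈ Q, F.Reachable v r)
    (hdisj : ∀ v ∈ Q, v ∉ U) {a₁ u₁ a₂ u₂ : V} (hne : (a₁, u₁) ≠ (a₂, u₂))
    (ha₁ : a₁ ∈ Q) (hu₁ : u₁ ∈ U) (hau₁ : G.Adj a₁ u₁)
    (ha₂ : a₂ ∈ Q) (hu₂ : u₂ ∈ U) (hau₂ : G.Adj a₂ u₂)
    (hU : Admissible G X B U) : Admissible G (X ⊔ F) B (U ∪ Q) := by
  intro β hβ hβ0
  have hneg' : ∀ x, x ∉ B → -x ∉ B := fun x hx h => hx (by simpa using hneg _ h)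
  have hu₁Q : u₁ ∉ Q := fun h => hdisj _ h hu₁
  have hu₂Q : u₂ ∉ Q := fun h => hdisj _ h hu₂
  obtain ⟨g, hg⟩ : ∃ g, g ∉ B := by
    by_contra! h
    have := Finset.card_le_card (fun x _ => h x : Finset.univ ⊆ B)
    rw [Finset.card_univ] at this
    omega
  -- An arbitrary orientation of the new edges, each carrying the value `g`.
  let e := Fintype.equivFin V
  let o : V → V → A := fun u v => if e u < e v then g else if e v < e u then -g else 0
  have ho : ∀ u v, o u v = - o v u := by
    intro u v
    simp only [o]
    rcases lt_trichotomy (e u) (e v) with h | h | h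
    · simp [h, h.not_gt]
    · simp [h]
    · simp [h, h.not_gt]
  have hoB : ∀ u v, u ≠ v → o u v ∉ B := by
    intro u v huv
    have : e u ≠ e v := fun h => huv (e.injective h)
    simp only [o]
    rcases lt_or_gt_of_ne this with h | h
    · simp [h, hg]
    · simp [h, h.not_gt, hneg' g hg]
  let N : V → V → Prop := fun u v => G.Adj u v ∧ (u ∈ U ∪ Q ∧ v ∈ U ∪ Q) ∧ ¬ (u ∈ U ∧ v ∈ U) ∧
    ¬ F.Adj u v ∧ ¬ (u = a₁ ∧ v = u₁) ∧ ¬ (u = u₁ ∧ v = a₁) ∧ ¬ (u = a₂ ∧ v = u₂) ∧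
    ¬ (u = u₂ ∧ v = a₂)
  have hN : ∀ u v, N u v ↔ N v u := by
    intro u v
    simp only [N, G.adj_comm u v, F.adj_comm u v]
    tauto
  let f₀ : V → V → A := fun u v => if N u v then o u v else 0
  have hf₀ : IsFlowOn (inside G (U ∪ Q)) (fun u => ∑ v, f₀ u v) f₀ := by
    refine ⟨fun u v => ?_, fun u v huv => ?_, fun u => rfl⟩
    · by_cases h : N u v
      · simp only [f₀, if_pos h, if_pos ((hN u v).1 h)]; exact ho u v
      · simp only [f₀, if_neg h, if_neg (fun h' => h ((hN u v).2 h')), neg_zero]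
    · exact if_neg fun h => huv ⟨h.1, h.2.1⟩
  set b : V → A := fun v => β v - ∑ w, f₀ v w with hb
  have hb0 : ∑ v, b v = 0 := by
    rw [hb, Finset.sum_sub_distrib, hβ0, hf₀.sum_boundary, sub_zero]
  have hbsupp : ∀ v, v ∉ U ∪ Q → b v = 0 := by
    intro v hv
    simp only [hb, hβ v hv, zero_sub, neg_eq_zero]
    exact Finset.sum_eq_zero fun w _ => hf₀.2.1 v w fun h => hv h.2.1
  set s : A := ∑ v, if v ∈ Q then b v else 0 with hs
  obtain ⟨c, hc, hsc⟩ : ∃ c, c ∉ B ∧ s - c ∉ B := by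
    by_contra! h
    have hsub : (Finset.univ : Finset A) ⊆ B ∪ B.image (fun x => s - x) := by
      intro x _
      by_cases hx : x ∈ B
      · exact Finset.mem_union_left _ hx
      · exact Finset.mem_union_right _ (Finset.mem_image.2 ⟨s - x, h x hx, by abel⟩)
    have h1 := (Finset.card_le_card hsub).trans (Finset.card_union_le _ _)
    have h2 : (B.image (fun x => s - x)).card ≤ B.card := Finset.card_image_le
    rw [Finset.card_univ] at h1
    omega
  have hE₁ := isFlowOn_edgeFlow (H := inside G (U ∪ Q)) ⟨hau₁, Or.inr ha₁, Or.inl hu₁⟩ c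
  have hE₂ := isFlowOn_edgeFlow (H := inside G (U ∪ Q)) ⟨hau₂, Or.inr ha₂, Or.inl hu₂⟩ (s - c)
  set b' : V → A := fun v => b v - ((if v = a₁ then c else 0) - (if v = u₁ then c else 0))
    - ((if v = a₂ then s - c else 0) - (if v = u₂ then s - c else 0)) with hb'
  have hb'0 : ∑ v, b' v = 0 := by
    simp [hb', Finset.sum_sub_distrib, hb0]
  have hb'supp : ∀ v, v ∉ U ∪ Q → b' v = 0 := by
    intro v hv
    have h1 : v ≠ a₁ := by rintro rfl; exact hv (Or.inr ha₁)
    have h2 : v ≠ u₁ := by rintro rfl; exact hv (Or.inl hu₁)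
    have h3 : v ≠ a₂ := by rintro rfl; exact hv (Or.inr ha₂)
    have h4 : v ≠ u₂ := by rintro rfl; exact hv (Or.inl hu₂)
    simp [hb', hbsupp v hv, h1, h2, h3, h4]
  have hb'Q : ∑ v, (if v ∈ Q then b' v else 0) = 0 := by
    have : ∀ v, (if v ∈ Q then b' v else 0) = (if v ∈ Q then b v else 0)
        - (if v = a₁ then c else 0) - (if v = a₂ then s - c else 0) := by
      intro v
      by_cases hv : v ∈ Q
      · have h2 : v ≠ u₁ := by rintro rfl; exact hu₁Q hv
        have h4 : v ≠ u₂ := by rintro rfl; exact hu₂Q hv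
        simp [hb', hv, h2, h4]
      · have h1 : v ≠ a₁ := by rintro rfl; exact hv ha₁
        have h3 : v ≠ a₂ := by rintro rfl; exact hv ha₂
        simp [hv, h1, h3]
    simp only [this, Finset.sum_sub_distrib, ← hs]
    simp
  have hb'U : ∑ v, (if v ∈ U then b' v else 0) = 0 := by
    have : ∀ v, (if v ∈ U then b' v else 0) = b' v - (if v ∈ Q then b' v else 0) := by
      intro v
      by_cases hv : v ∈ Q
      · simp [hv, hdisj v hv]
      · by_cases hvU : v ∈ U
        · simp [hv, hvU]
        · have : b' v = 0 := hb'supp v (by rintro (h | h); exacts [hvU h, hv h])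
          simp [hv, hvU, this]
    simp only [this, Finset.sum_sub_distrib, hb'0, hb'Q, sub_zero]
  obtain ⟨f₂, hf₂⟩ := exists_flow_of_reachable F r (fun v => if v ∈ Q then b' v else 0)
    (fun v hv => hconn v (by by_contra h; simp [h] at hv)) hb'Q
  obtain ⟨f₃, hf₃, hf₃B⟩ := hU (fun v => if v ∈ U then b' v else 0) (fun v hv => if_neg hv) hb'U
  have hFle : F ≤ inside G (U ∪ Q) := fun u v h =>
    ⟨(hF u v h).1, Or.inr (hF u v h).2.1, Or.inr (hF u v h).2.2⟩
  have hUle : inside G U ≤ inside G (U ∪ Q) := fun u v h =>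
    ⟨h.1, Or.inl h.2.1, Or.inl h.2.2⟩
  have htot := (((hf₀.add hE₁).add hE₂).add (hf₂.mono hFle)).add (hf₃.mono hUle)
  refine ⟨fun u v => f₀ u v + edgeFlow a₁ u₁ c u v + edgeFlow a₂ u₂ (s - c) u v + f₂ u v + f₃ u v,
    ?_, ?_⟩
  · convert htot using 1
    funext v
    by_cases hv : v ∈ Q
    · simp only [hv, hdisj v hv, if_true, if_false, hb', hb]; abel
    · by_cases hvU : v ∈ U
      · simp only [hv, hvU, if_true, if_false, hb', hb]; abel
      · have hvn : v ∉ U ∪ Q := by rintro (h | h); exacts [hvU h, hv h]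
        have h0 := hb'supp v hvn
        simp only [hb', hb] at h0
        simp only [hv, hvU, if_false, add_zero]
        refine sub_eq_zero.1 (Eq.trans ?_ h0)
        abel
  · intro u v hu hv hadj hX
    have hXn : ¬ X.Adj u v := fun h => hX (Or.inl h)
    have hFn : ¬ F.Adj u v := fun h => hX (Or.inr h)
    have h2 : f₂ u v = 0 := hf₂.2.1 u v hFn
    by_cases huv : u ∈ U ∧ v ∈ U
    · have h0 : f₀ u v = 0 := if_neg fun h => h.2.2.1 huv
      have h1 : edgeFlow a₁ u₁ c u v = 0 := edgeFlow_eq_zero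
        (by rintro ⟨rfl, rfl⟩; exact hdisj _ ha₁ huv.1)
        (by rintro ⟨rfl, rfl⟩; exact hdisj _ ha₁ huv.2)
      have h1' : edgeFlow a₂ u₂ (s - c) u v = 0 := edgeFlow_eq_zero
        (by rintro ⟨rfl, rfl⟩; exact hdisj _ ha₂ huv.1)
        (by rintro ⟨rfl, rfl⟩; exact hdisj _ ha₂ huv.2)
      simp only [h0, h1, h1', h2, zero_add]
      exact hf₃B u v huv.1 huv.2 hadj hXn
    have h3 : f₃ u v = 0 := hf₃.2.1 u v fun h => huv h.2
    simp only [h2, h3, add_zero]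
    have hne' : ¬ (a₁ = a₂ ∧ u₁ = u₂) := fun h => hne (Prod.ext h.1 h.2)
    have hx : ∀ a ∈ Q, ∀ w ∈ U, a ≠ w := by rintro a ha _ hw rfl; exact hdisj _ ha hw
    by_cases hN' : N u v
    · have h0 : f₀ u v = o u v := if_pos hN'
      obtain ⟨-, -, -, -, h4, h5, h6, h7⟩ := hN'
      rw [h0, edgeFlow_eq_zero h4 h5, edgeFlow_eq_zero h6 h7, add_zero, add_zero]
      exact hoB u v hadj.ne
    · have h0 : f₀ u v = 0 := if_neg hN'
      rw [h0, zero_add]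
      have hcases : (u = a₁ ∧ v = u₁) ∨ (u = u₁ ∧ v = a₁) ∨ (u = a₂ ∧ v = u₂) ∨
          (u = u₂ ∧ v = a₂) := by
        by_contra hcon
        exact hN' ⟨hadj, ⟨hu, hv⟩, huv, hFn, fun h => hcon (Or.inl h),
          fun h => hcon (Or.inr (Or.inl h)), fun h => hcon (Or.inr (Or.inr (Or.inl h))),
          fun h => hcon (Or.inr (Or.inr (Or.inr h)))⟩
      rcases hcases with ⟨rfl, rfl⟩ | ⟨rfl, rfl⟩ | ⟨rfl, rfl⟩ | ⟨rfl, rfl⟩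
      · rw [edgeFlow_eq_zero (a := a₂) hne' (fun h => hx _ ha₁ _ hu₂ h.1), add_zero]
        simpa [edgeFlow, hx _ ha₁ _ hu₁] using hc
      · rw [edgeFlow_eq_zero (a := a₂) (fun h => hx _ ha₂ _ hu₁ h.1.symm)
          (fun h => hne' ⟨h.2, h.1⟩), add_zero]
        simpa [edgeFlow, hx _ ha₁ _ hu₁, (hx _ ha₁ _ hu₁).symm] using hneg' _ hc
      · rw [edgeFlow_eq_zero (a := a₁) (fun h => hne' ⟨h.1.symm, h.2.symm⟩)
          (fun h => hx _ ha₂ _ hu₁ h.1), zero_add]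
        simpa [edgeFlow, hx _ ha₂ _ hu₂] using hsc
      · rw [edgeFlow_eq_zero (a := a₁) (fun h => hx _ ha₁ _ hu₂ h.1.symm)
          (fun h => hne' ⟨h.2.symm, h.1.symm⟩), zero_add]
        have := hneg' _ hsc
        simpa [edgeFlow, hx _ ha₂ _ hu₂, (hx _ ha₂ _ hu₂).symm] using this

/-- Growing `U` by nonseparating ears yields an edge set `X` whose deletion leaves `G` connected and
such that flows with arbitrary boundary can avoid `B` off `X`. -/
lemma exists_decomposition [Fintype A] {G : SimpleGraph V} {B : Finset A}
    (hneg : ∀ x ∈ B, -x ∈ B) (hcard : 2 * B.card < Fintype.card A)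
    (hcut : ∀ S : Set V, S.Nonempty → S ≠ Set.univ → 3 ≤ (cutPairs G S).card) (n : ℕ) :
    ∀ (U : Set V) (X : SimpleGraph V), Uᶜ.ncard = n → U.Nonempty →
      (∀ u v, X.Adj u v → u ∈ U ∧ v ∈ U) → Admissible G X B U →
      (∀ a b, (G \ X).Reachable a b) →
      ∃ X' : SimpleGraph V, Admissible G X' B Set.univ ∧ ∀ a b, (G \ X').Reachable a b := by
  induction n using Nat.strong_induction_on with
  | _ n ih =>
    intro U X hn hU0 hXU hadm hY
    by_cases hUu : U = Set.univ
    · subst hUu; exact ⟨X, hadm, hY⟩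
    obtain ⟨x, hxU⟩ := (Set.ne_univ_iff_exists_notMem U).1 hUu
    set K : Set V := {v | (inside G Uᶜ).Reachable x v} with hK
    have hxK : x ∈ K := SimpleGraph.Reachable.refl _
    have hKU : ∀ v ∈ K, v ∉ U := fun v hv =>
      mem_of_reachable (S := Uᶜ) hv hxU fun a b hab _ => hab.2.2
    have hKout : ∀ a b, G.Adj a b → a ∈ K → b ∉ K → b ∈ U := by
      intro a b hab ha hb
      by_contra hbU
      have h4 : (inside G Uᶜ).Adj a b := ⟨hab, hKU a ha, hbU⟩
      exact hb (SimpleGraph.Reachable.trans ha h4.reachable)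
    have hKconn : ∀ a ∈ K, ∀ b ∈ K, (inside G K).Reachable a b := by
      have hle : inside (inside G Uᶜ) K ≤ inside G K := fun a b h => ⟨h.1.1, h.2⟩
      have h1 : ∀ a ∈ K, (inside G K).Reachable x a := fun a ha =>
        (reachable_inside_component ha).mono hle
      exact fun a ha b hb => (h1 a ha).symm.trans (h1 b hb)
    obtain ⟨u₀, hu₀⟩ := hU0
    obtain ⟨F, hFK, ⟨p, q, hpq, hp, hq, hreach⟩, hFc⟩ := exists_ear ⟨x, hxK⟩
      (fun S hS hSK => hcut S hS fun h => hKU u₀ (hSK (h ▸ Set.mem_univ u₀)) hu₀) hKconn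
    rw [mem_cutPairs] at hp hq
    set Q : Set V := {v | F.Reachable p.1 v} with hQ
    have hQK : ∀ v ∈ Q, v ∈ K := fun v hv =>
      mem_of_reachable (S := K) hv hp.1 fun a b hab _ => (hFK hab).2.2
    have hpQ : p.1 ∈ Q := SimpleGraph.Reachable.refl _
    refine ih _ ?_ (U ∪ Q) (X ⊔ inside F Q) rfl ⟨u₀, Or.inl hu₀⟩ ?_ ?_ ?_
    · rw [← hn]
      refine Set.ncard_lt_ncard ⟨?_, ?_⟩ (Set.toFinite _)
      · exact Set.compl_subset_compl.2 Set.subset_union_left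
      · exact fun h => h (hKU _ hp.1) (Or.inr hpQ)
    · rintro u v (h | h)
      · exact ⟨Or.inl (hXU u v h).1, Or.inl (hXU u v h).2⟩
      · exact ⟨Or.inr h.2.1, Or.inr h.2.2⟩
    · exact hadm.step hneg hcard (fun u v h => ⟨(hFK h.1).1, h.2⟩)
        (fun v hv => (reachable_inside_component hv).symm) (fun v hv => hKU v (hQK v hv))
        (a₁ := p.1) (u₁ := p.2) (a₂ := q.1) (u₂ := q.2) hpq
        hpQ (hKout _ _ hp.2.2 hp.1 hp.2.1) hp.2.2 hreach (hKout _ _ hq.2.2 hq.1 hq.2.1) hq.2.2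
    · -- A deleted edge of `F` can be bypassed inside `K`, where no edge of `X` lies.
      intro a b
      have hle : inside G K \ F ≤ G \ (X ⊔ inside F Q) := by
        rintro u v ⟨h, h'⟩
        refine ⟨h.1, ?_⟩
        rintro (h'' | h'')
        · exact hKU u h.2.1 (hXU u v h'').1
        · exact h' h''.1
      refine mem_of_reachable (S := {v | (G \ (X ⊔ inside F Q)).Reachable a v}) (hY a b)
        (SimpleGraph.Reachable.refl _) ?_
      intro u v huv hu
      refine SimpleGraph.Reachable.trans hu ?_
      by_cases h : (inside F Q).Adj u v
      · exact (hFc u (hFK h.1).2.1 v (hFK h.1).2.2).mono hle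
      · have h4 : (G \ (X ⊔ inside F Q)).Adj u v :=
          ⟨huv.1, fun h' => h'.elim huv.2 h⟩
        exact h4.reachable

end Growth

/-! ### Eulerian orientations -/

section Orientation

variable {V : Type} [Fintype V] [DecidableEq V]

/-- A finite family of links between vertices in which every vertex has even degree has an Eulerian
orientation. Two links meeting at a vertex `a` are replaced by the single link that bypasses `a`. -/
lemma exists_signs {ι : Type} [DecidableEq ι] (n : ℕ) :
    ∀ (I : Finset ι) (h t : ι → V), I.card = n →
      (∀ v, ∑ i ∈ I, ((if h i = v then (1 : ZMod 2) else 0) + if t i = v then 1 else 0) = 0) →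
      ∃ s : ι → ℤ, (∀ i, s i = 1 ∨ s i = -1) ∧
        ∀ v, ∑ i ∈ I, s i * ((if h i = v then 1 else 0) - if t i = v then 1 else 0) = 0 := by
  induction n with
  | zero =>
    intro I h t hI _
    rw [Finset.card_eq_zero] at hI
    exact ⟨fun _ => 1, fun _ => Or.inl rfl, by simp [hI]⟩
  | succ n ih =>
    intro I h t hI heven
    obtain ⟨i, hi⟩ : I.Nonempty := by rw [← Finset.card_pos]; omega
    have hcard : (I.erase i).card = n := by rw [Finset.card_erase_of_mem hi, hI]; rfl
    have two : ∀ x : ZMod 2, x + x = 0 := by decide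
    by_cases hloop : h i = t i
    · obtain ⟨s, hs, hs0⟩ := ih (I.erase i) h t hcard fun v => by
        have := heven v
        rw [← Finset.add_sum_erase _ _ hi, hloop, two, zero_add] at this
        exact this
      refine ⟨s, hs, fun v => ?_⟩
      rw [← Finset.add_sum_erase _ _ hi, hs0 v, hloop]
      simp
    -- By parity some other link `j` meets the vertex `h i`.
    obtain ⟨j, hj, hji⟩ : ∃ j ∈ I.erase i, h j = h i ∨ t j = h i := by
      by_contra! hcon
      have := heven (h i)
      rw [← Finset.add_sum_erase _ _ hi, Finset.sum_eq_zero (s := I.erase i)] at this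
      · simp [Ne.symm hloop] at this
      · intro j hj
        simp [(hcon j hj).1, (hcon j hj).2]
    have hij : i ≠ j := (Finset.ne_of_mem_erase hj).symm
    rcases hji with hji | hji
    · obtain ⟨s, hs, hs0⟩ := ih (I.erase i) (Function.update h j (t i)) t hcard fun v => by
        have := heven v
        rw [← Finset.add_sum_erase _ _ hi, ← Finset.add_sum_erase _ _ hj, hji] at this
        rw [← Finset.add_sum_erase _ _ hj]
        rw [Finset.sum_congr (s₂ := (I.erase i).erase j) rfl (g := fun x =>
          ((if h x = v then (1 : ZMod 2) else 0) + if t x = v then 1 else 0)) fun k hk => by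
            rw [Function.update_of_ne (Finset.ne_of_mem_erase hk)]]
        rw [Function.update_self]
        linear_combination this - two (if h i = v then 1 else 0)
      refine ⟨Function.update s i (- s j), fun k => ?_, fun v => ?_⟩
      · by_cases hk : k = i
        · subst hk
          rw [Function.update_self]
          rcases hs j with h1 | h1 <;> simp [h1]
        · rw [Function.update_of_ne hk]; exact hs k
      · have := hs0 v
        rw [← Finset.add_sum_erase _ _ hj] at this
        rw [Finset.sum_congr (s₂ := (I.erase i).erase j) rfl (g := fun x =>
          s x * ((if h x = v then (1 : ℤ) else 0) - if t x = v then 1 else 0)) fun k hk => by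
            rw [Function.update_of_ne (Finset.ne_of_mem_erase hk)]] at this
        rw [Function.update_self] at this
        rw [← Finset.add_sum_erase _ _ hi, ← Finset.add_sum_erase _ _ hj]
        rw [Finset.sum_congr (s₂ := (I.erase i).erase j) rfl (g := fun x =>
          s x * ((if h x = v then (1 : ℤ) else 0) - if t x = v then 1 else 0)) fun k hk => by
            rw [Function.update_of_ne (Finset.ne_of_mem_erase (Finset.mem_of_mem_erase hk))]]
        rw [Function.update_self, Function.update_of_ne hij.symm, hji]
        linear_combination this
    · obtain ⟨s, hs, hs0⟩ := ih (I.erase i) h (Function.update t j (t i)) hcard fun v => by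
        have := heven v
        rw [← Finset.add_sum_erase _ _ hi, ← Finset.add_sum_erase _ _ hj, hji] at this
        rw [← Finset.add_sum_erase _ _ hj]
        rw [Finset.sum_congr (s₂ := (I.erase i).erase j) rfl (g := fun x =>
          ((if h x = v then (1 : ZMod 2) else 0) + if t x = v then 1 else 0)) fun k hk => by
            rw [Function.update_of_ne (Finset.ne_of_mem_erase hk)]]
        rw [Function.update_self]
        linear_combination this - two (if h i = v then 1 else 0)
      refine ⟨Function.update s i (s j), fun k => ?_, fun v => ?_⟩
      · by_cases hk : k = i
        · subst hk
          rw [Function.update_self]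
          exact hs j
        · rw [Function.update_of_ne hk]; exact hs k
      · have := hs0 v
        rw [← Finset.add_sum_erase _ _ hj] at this
        rw [Finset.sum_congr (s₂ := (I.erase i).erase j) rfl (g := fun x =>
          s x * ((if h x = v then (1 : ℤ) else 0) - if t x = v then 1 else 0)) fun k hk => by
            rw [Function.update_of_ne (Finset.ne_of_mem_erase hk)]] at this
        rw [Function.update_self] at this
        rw [← Finset.add_sum_erase _ _ hi, ← Finset.add_sum_erase _ _ hj]
        rw [Finset.sum_congr (s₂ := (I.erase i).erase j) rfl (g := fun x =>
          s x * ((if h x = v then (1 : ℤ) else 0) - if t x = v then 1 else 0)) fun k hk => by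
            rw [Function.update_of_ne (Finset.ne_of_mem_erase (Finset.mem_of_mem_erase hk))]]
        rw [Function.update_self, Function.update_of_ne hij.symm, hji]
        linear_combination this

/-- Represent every edge by its `e`-increasing pair `p` and give it the weight `s p` at its first
end and `c * s p` at its second. The total weight that the edges contribute at `u` is then a sum
over the neighbours of `u`. -/
lemma sum_increasing_pairs {R : Type} [CommRing R] (M : SimpleGraph V) (e : V → ℕ)
    (he : Function.Injective e) (s : V × V → R) (c : R) (u : V) :
    ∑ p ∈ Finset.univ.filter (fun p : V × V => M.Adj p.1 p.2 ∧ e p.1 < e p.2),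
        s p * ((if p.1 = u then 1 else 0) + c * if p.2 = u then 1 else 0)
      = ∑ v, if M.Adj u v then (if e u < e v then s (u, v) else c * s (v, u)) else 0 := by
  have h1 : ∀ p : V × V, (if M.Adj p.1 p.2 ∧ e p.1 < e p.2 then
      s p * ((if p.1 = u then 1 else 0) + c * if p.2 = u then 1 else 0) else 0)
      = (if p.1 = u then (if M.Adj p.1 p.2 ∧ e p.1 < e p.2 then s p else 0) else 0)
      + (if p.2 = u then (if M.Adj p.1 p.2 ∧ e p.1 < e p.2 then c * s p else 0) else 0) := by
    intro p
    split_ifs <;> ring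
  rw [Finset.sum_filter, Finset.sum_congr rfl fun p _ => h1 p, Finset.sum_add_distrib,
    Fintype.sum_prod_type, Fintype.sum_prod_type_right]
  simp only
  rw [Finset.sum_comm, Finset.sum_comm (f := fun y x : V =>
    if y = u then (if M.Adj x y ∧ e x < e y then c * s (x, y) else 0) else 0)]
  simp only [Finset.sum_ite_eq', Finset.mem_univ, if_true]
  rw [← Finset.sum_add_distrib]
  refine Finset.sum_congr rfl fun v _ => ?_
  by_cases huv : M.Adj u v
  · have hne : e u ≠ e v := fun h => huv.ne (he h)
    rcases lt_or_gt_of_ne hne with h | h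
    · simp [huv, huv.symm, h, h.not_gt]
    · simp [huv, huv.symm, h, h.not_gt]
  · simp [huv, M.adj_comm v u]

/-- An Eulerian orientation of an even graph, as an integer flow with values `1` and `-1`. -/
lemma exists_eulerian_flow (M : SimpleGraph V)
    (heven : ∀ u, ∑ v, (if M.Adj u v then (1 : ZMod 2) else 0) = 0) :
    ∃ ε : V → V → ℤ, IsFlowOn M (fun _ => 0) ε ∧ ∀ u v, M.Adj u v → ε u v = 1 ∨ ε u v = -1 := by
  let e : V → ℕ := fun v => (Fintype.equivFin V v : ℕ)
  have he : Function.Injective e := fun a b h => (Fintype.equivFin V).injective (Fin.ext h)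
  obtain ⟨s, hs, hs0⟩ := exists_signs _
    (Finset.univ.filter (fun p : V × V => M.Adj p.1 p.2 ∧ e p.1 < e p.2)) Prod.fst Prod.snd rfl
    (fun v => by
      have := sum_increasing_pairs M e he (fun _ => (1 : ZMod 2)) 1 v
      simp only [one_mul, ite_self] at this
      rw [this, heven])
  refine ⟨fun u v => if M.Adj u v then (if e u < e v then s (u, v) else -1 * s (v, u)) else 0,
    ⟨fun u v => ?_, fun u v huv => if_neg huv, fun u => ?_⟩, fun u v huv => ?_⟩
  · by_cases huv : M.Adj u v
    · have hne : e u ≠ e v := fun h => huv.ne (he h)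
      rcases lt_or_gt_of_ne hne with h | h
      · simp [huv, huv.symm, h, h.not_gt]
      · simp [huv, huv.symm, h, h.not_gt]
    · simp [huv, M.adj_comm v u]
  · rw [← sum_increasing_pairs M e he s (-1) u]
    refine Eq.trans ?_ (hs0 u)
    refine Finset.sum_congr rfl fun p _ => ?_
    ring
  · simp only [huv, if_true]
    split_ifs
    · exact hs _
    · rcases hs (v, u) with h | h <;> simp [h]

end Orientation

/-! ### Graphs without small cuts -/

section ThreeEdgeConnected

variable {V : Type} [Fintype V] [DecidableEq V] {A : Type} [AddCommGroup A]

/-- The forbidden values `0, d, -d` fill less than half of the group. When `|A| = 6` this needs `d`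
to have order two. -/
lemma exists_forbidden [Fintype A] (hA : 6 ≤ Fintype.card A) :
    ∃ (d : A) (B : Finset A), d ≠ 0 ∧ (0 : A) ∈ B ∧ d ∈ B ∧ -d ∈ B ∧ (∀ x ∈ B, -x ∈ B) ∧
      2 * B.card < Fintype.card A := by
  rcases hA.eq_or_lt with h6 | h7
  · obtain ⟨d, hd⟩ := exists_prime_addOrderOf_dvd_card (G := A) 2 (by rw [← h6]; norm_num)
    have hd0 : d ≠ 0 := by
      rintro rfl
      simp at hd
    have hdd : -d = d := by
      have := addOrderOf_nsmul_eq_zero d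
      rw [hd, two_nsmul] at this
      exact (eq_neg_of_add_eq_zero_left this).symm
    refine ⟨d, {0, d}, hd0, by simp, by simp, by simp [hdd], by simp [hdd], ?_⟩
    have := Finset.card_le_two (a := (0 : A)) (b := d)
    omega
  · have : Nontrivial A := Fintype.one_lt_card_iff_nontrivial.1 (by omega)
    obtain ⟨d, hd⟩ := exists_ne (0 : A)
    refine ⟨d, {0, d, -d}, hd, by simp, by simp, by simp, by simp, ?_⟩
    have := Finset.card_le_three (a := (0 : A)) (b := d) (c := -d)
    omega

/-- If some flow avoids `0, d, -d` off `X`, and `G \ X` is connected, then the zeros on `X` can be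
repaired: a parity argument in `G \ X` extends the set of zeros on `X` to an even edge set by edges
off `X`, and `d` is sent along an Eulerian orientation of it. Off `X` the change by `d` or `-d` cannot
create a zero. -/
lemma exists_nz_flow_of_admissible {G X : SimpleGraph V} {B : Finset A} {d : A} (hd : d ≠ 0)
    (h0B : (0 : A) ∈ B) (hdB : d ∈ B) (hdB' : -d ∈ B) (hX : Admissible G X B Set.univ)
    (hY : ∀ a b, (G \ X).Reachable a b) (v₀ : V) :
    ∃ f : V → V → A, IsFlowOn G (fun _ => 0) f ∧ ∀ u v, G.Adj u v → f u v ≠ 0 := by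
  obtain ⟨f, hf', hfB⟩ := hX (fun _ => 0) (fun _ _ => rfl) (by simp)
  have hf : IsFlowOn G (fun _ => 0) f := hf'.mono fun u v h => h.1
  let Z : SimpleGraph V :=
    { Adj := fun u v => (G.Adj u v ∧ X.Adj u v) ∧ f u v = 0
      symm := ⟨fun u v h => ⟨⟨h.1.1.symm, h.1.2.symm⟩, by rw [hf.1, h.2, neg_zero]⟩⟩
      loopless := ⟨fun u h => h.1.1.ne rfl⟩ }
  have two : ∀ x : ZMod 2, x = -x := by decide
  -- Modulo two, the indicator of `Z` is a flow, so its degrees sum to zero.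
  have hZ : IsFlowOn Z (fun u => ∑ v, if Z.Adj u v then (1 : ZMod 2) else 0)
      (fun u v => if Z.Adj u v then 1 else 0) :=
    ⟨fun u v => by simp only [Z.adj_comm u v]; exact two _, fun u v h => if_neg h, fun u => rfl⟩
  obtain ⟨j, hj⟩ := exists_flow_of_reachable (G \ X) v₀ _ (fun v _ => hY v v₀) hZ.sum_boundary
  let J : SimpleGraph V :=
    { Adj := fun u v => j u v ≠ 0
      symm := ⟨fun u v h h' => h (by rw [hj.1, h', neg_zero])⟩
      loopless := ⟨fun u h => h (hj.2.1 u u (SimpleGraph.irrefl _))⟩ }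
  have hJ : ∀ u v, J.Adj u v → G.Adj u v ∧ ¬ X.Adj u v := by
    intro u v h
    by_contra hcon
    exact h (hj.2.1 u v hcon)
  obtain ⟨M, hMadj⟩ : ∃ M : SimpleGraph V, ∀ u v, M.Adj u v ↔ Z.Adj u v ∨ J.Adj u v :=
    ⟨Z ⊔ J, fun u v => Iff.rfl⟩
  have hM : ∀ u v, (if M.Adj u v then (1 : ZMod 2) else 0)
      = (if Z.Adj u v then 1 else 0) + j u v := by
    intro u v
    have val : ∀ x : ZMod 2, x ≠ 0 → x = 1 := by decide
    by_cases hz : Z.Adj u v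
    · have : j u v = 0 := hj.2.1 u v fun h => h.2 hz.1.2
      simp [hMadj, hz, this]
    · by_cases h : J.Adj u v
      · simp [hMadj, hz, h, val _ h]
      · have : j u v = 0 := not_not.1 h
        simp [hMadj, hz, h, this]
  obtain ⟨ε, hε, hε1⟩ := exists_eulerian_flow M (fun u => by
    simp only [hM, Finset.sum_add_distrib, hj.2.2]
    exact CharTwo.add_self_eq_zero _)
  have hεG : IsFlowOn G (fun _ => (0 : A)) (fun u v => ε u v • d) := by
    refine ⟨fun u v => ?_, fun u v h => ?_, fun u => ?_⟩
    · simp only [hε.1 u v, neg_smul]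
    · have h1 : ¬ M.Adj u v := fun hm => ?_
      · simp only [hε.2.1 u v h1, zero_smul]
      rcases (hMadj u v).1 hm with h' | h'
      exacts [h h'.1.1, h (hJ u v h').1]
    · rw [← Finset.sum_smul, hε.2.2, zero_smul]
  refine ⟨fun u v => f u v + ε u v • d, by simpa using hf.add hεG, fun u v huv h => ?_⟩
  replace h : f u v + ε u v • d = 0 := h
  have hoff : ¬ X.Adj u v → f u v ∉ B := fun hx => hfB u v trivial trivial huv hx
  by_cases hz : Z.Adj u v
  · rw [hz.2, zero_add] at h
    rcases hε1 u v ((hMadj u v).2 (Or.inl hz)) with h1 | h1 <;> simp [h1, hd] at h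
  by_cases hJuv : J.Adj u v
  · have hB := hoff (hJ u v hJuv).2
    rcases hε1 u v ((hMadj u v).2 (Or.inr hJuv)) with h1 | h1 <;> rw [h1] at h
    · rw [one_smul] at h
      exact hB (by rwa [eq_neg_of_add_eq_zero_left h])
    · rw [neg_smul, one_smul] at h
      exact hB (by rwa [eq_neg_of_add_eq_zero_left h, neg_neg])
  · rw [hε.2.1 u v (fun hm => ((hMadj u v).1 hm).elim hz hJuv), zero_smul, add_zero] at h
    by_cases hx : X.Adj u v
    · exact hz ⟨⟨huv, hx⟩, h⟩
    · exact hoff hx (h ▸ h0B)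

/-- Seymour's six-flow theorem over an arbitrary group, for graphs without cuts of at most two edges. -/
lemma exists_nz_flow [Fintype A] (hA : 6 ≤ Fintype.card A) {G : SimpleGraph V}
    (hG : G.Connected)
    (hcut : ∀ S : Set V, S.Nonempty → S ≠ Set.univ → 3 ≤ (cutPairs G S).card) :
    ∃ f : V → V → A, IsFlowOn G (fun _ => 0) f ∧ ∀ u v, G.Adj u v → f u v ≠ 0 := by
  obtain ⟨d, B, hd, h0B, hdB, hdB', hneg, hcard⟩ := exists_forbidden (A := A) hA
  obtain ⟨v₀⟩ := hG.nonempty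
  obtain ⟨X, hX, hY⟩ := exists_decomposition hneg hcard hcut _ {v₀} ⊥ rfl ⟨v₀, rfl⟩
    (fun u v h => h.elim)
    (fun β hβ hβ0 => ⟨fun _ _ => 0, by
      have h1 : β v₀ = 0 := by
        rw [← hβ0, Finset.sum_eq_single v₀ (fun v _ hv => hβ v hv) (by simp)]
      have h2 : β = fun _ => 0 := by
        funext v
        by_cases hv : v = v₀
        · rw [hv, h1]
        · exact hβ v hv
      rw [h2]
      exact isFlowOn_zero _, by
      rintro u v rfl rfl huv
      exact (huv.ne rfl).elim⟩)
    (fun a b => by rw [sdiff_bot]; exact hG.preconnected a b)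
  exact exists_nz_flow_of_admissible hd h0B hdB hdB' hX hY v₀

end ThreeEdgeConnected

/-! ### Contracting an edge of a flow-critical graph -/

section Critical

variable {V : Type} [Fintype V] [DecidableEq V] {A : Type} [AddCommGroup A]

lemma IsFlowOn.hasNZFlow {G : SimpleGraph V} {β : V → A} {f : V → V → A} (hf : IsFlowOn G β f)
    (h : ∀ u v, G.Adj u v → f u v ≠ 0) : HasNZFlow G β := by
  refine ⟨f, fun u v _ => hf.1 u v, h, fun u => ?_⟩
  rw [← hf.2.2 u, Finset.sum_filter]
  refine Finset.sum_congr rfl fun v _ => ?_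
  split_ifs with huv
  · rfl
  · exact (hf.2.1 u v huv).symm

/-- The partition whose only part with more than one element is `{x, y}`. -/
def pairSetoid (x y : V) : Setoid V where
  r u v := u = v ∨ ((u = x ∨ u = y) ∧ (v = x ∨ v = y))
  iseqv :=
    { refl := fun _ => Or.inl rfl
      symm := by
        rintro u v (h | h)
        exacts [Or.inl h.symm, Or.inr h.symm]
      trans := by
        rintro u v w (rfl | h) (rfl | h')
        exacts [Or.inl rfl, Or.inr h', Or.inr h, Or.inr ⟨h.1, h'.2⟩] }

/-- The nowhere-zero flow that criticality gives after contracting the edge `xy` lifts to a flow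
in `G`, whose value on `xy` is the only one that might be zero. -/
lemma FlowCritical.exists_flow {G : SimpleGraph V} (hcrit : FlowCritical G (fun _ => (0 : A)))
    {x y : V} (hxy : G.Adj x y) :
    ∃ f : V → V → A, IsFlowOn G (fun _ => 0) f ∧
      ∀ u v, G.Adj u v → f u v = 0 → (u = x ∧ v = y) ∨ (u = y ∧ v = x) := by
  have hr : ∀ u v, (pairSetoid x y).r u v ↔ u = v ∨ ((u = x ∨ u = y) ∧ (v = x ∨ v = y)) :=
    fun _ _ => Iff.rfl
  obtain ⟨f, hanti, hnz, hsum⟩ := hcrit.2.2.2 (pairSetoid x y) (by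
    intro z
    by_cases hz : z = x ∨ z = y
    · have : {v | (pairSetoid x y).r v z} = {x, y} := by
        ext v
        simp only [hr, Set.mem_ofPred_eq, Set.mem_insert_iff, Set.mem_singleton_iff]
        constructor
        · rintro (rfl | h)
          exacts [hz, h.1]
        · exact fun h => Or.inr ⟨h, hz⟩
      rw [this]
      exact SimpleGraph.induce_pair_connected_of_adj hxy
    · have : {v | (pairSetoid x y).r v z} = {z} := by
        ext v
        simp [hr, hz]
      rw [this]
      have : Subsingleton ({z} : Set V) := Set.subsingleton_singleton.coe_sort
      exact { preconnected := SimpleGraph.Preconnected.of_subsingleton,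
              nonempty := ⟨⟨z, rfl⟩⟩ })
    ⟨x, y, hxy.ne, Or.inr ⟨Or.inl rfl, Or.inr rfl⟩⟩
  -- `f` restricted to the edges that survive the contraction, extended by zero.
  let g : V → V → A := fun u v => if G.Adj u v ∧ ¬ (pairSetoid x y).r u v then f u v else 0
  have hcomm : ∀ u v, (G.Adj u v ∧ ¬ (pairSetoid x y).r u v) ↔
      (G.Adj v u ∧ ¬ (pairSetoid x y).r v u) := by
    intro u v
    rw [G.adj_comm u v, (pairSetoid x y).comm']
  have hg : IsFlowOn G (fun u => ∑ v, g u v) g := by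
    refine ⟨fun u v => ?_, fun u v h => if_neg fun h' => h h'.1, fun u => rfl⟩
    by_cases h : G.Adj u v ∧ ¬ (pairSetoid x y).r u v
    · simp only [g, if_pos h, if_pos ((hcomm u v).1 h)]
      exact hanti u v h.1 h.2
    · simp only [g, if_neg h, if_neg (fun h' => h ((hcomm u v).2 h')), neg_zero]
  have hpart : ∀ z, ∑ u ∈ Finset.univ.filter (fun u => (pairSetoid x y).r u z), ∑ v, g u v = 0 := by
    intro z
    have := hsum z
    simp only [Finset.sum_const_zero] at this
    rw [← this]
    exact Finset.sum_congr rfl fun u _ => (Finset.sum_filter _ _).symm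
  have hother : ∀ z, z ≠ x → z ≠ y → ∑ v, g z v = 0 := by
    intro z hzx hzy
    have h := hpart z
    rwa [show Finset.univ.filter (fun u => (pairSetoid x y).r u z) = {z} by
      ext v; simp [hr, hzx, hzy], Finset.sum_singleton] at h
  have hpair : ∑ v, g x v + ∑ v, g y v = 0 := by
    have h := hpart x
    rwa [show Finset.univ.filter (fun u => (pairSetoid x y).r u x) = {x, y} by
      ext v
      simp only [hr, Finset.mem_filter, Finset.mem_univ, true_and, Finset.mem_insert,
        Finset.mem_singleton, true_or, and_true]
      tauto, Finset.sum_pair hxy.ne] at h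
  refine ⟨fun u v => g u v + edgeFlow x y (- ∑ v, g x v) u v, ?_, ?_⟩
  · convert hg.add (isFlowOn_edgeFlow hxy (- ∑ v, g x v)) using 1
    funext u
    by_cases hux : u = x
    · subst hux
      simp [hxy.ne]
    · by_cases huy : u = y
      · subst huy
        rw [if_neg hux, if_pos rfl, zero_sub, neg_neg, add_comm, hpair]
      · simp [hux, huy, hother u hux huy]
  · intro u v huv h0
    by_contra! hcon
    have h1 : ¬ (u = x ∧ v = y) := fun h => hcon.1 h.1 h.2
    have h2 : ¬ (u = y ∧ v = x) := fun h => hcon.2 h.1 h.2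
    have h3 : G.Adj u v ∧ ¬ (pairSetoid x y).r u v := by
      refine ⟨huv, ?_⟩
      rintro (h | ⟨rfl | rfl, rfl | rfl⟩)
      · exact huv.ne h
      · exact huv.ne rfl
      · exact h1 ⟨rfl, rfl⟩
      · exact h2 ⟨rfl, rfl⟩
      · exact huv.ne rfl
    simp only [edgeFlow, if_neg h1, if_neg h2, sub_self, add_zero, g, if_pos h3] at h0
    exact hnz u v h3.1 h3.2 h0

/-- A connected graph with a single edge is `K₂`. -/
lemma nonempty_iso_of_unique_edge {G : SimpleGraph V} (hG : G.Connected) {a b : V}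
    (hab : G.Adj a b) (huniq : ∀ u v, G.Adj u v → (u = a ∧ v = b) ∨ (u = b ∧ v = a)) :
    Nonempty (G ≃g (⊤ : SimpleGraph (Fin 2))) := by
  have hV : ∀ v, v = a ∨ v = b := fun v =>
    mem_of_reachable (S := {v | v = a ∨ v = b}) (hG.preconnected a v) (Or.inl rfl) fun u v h _ => by
      rcases huniq u v h with h | h
      exacts [Or.inr h.2, Or.inl h.2]
  refine ⟨⟨⟨fun v => if v = a then 0 else 1, fun i => if i = 0 then a else b, ?_, ?_⟩, ?_⟩⟩
  · intro v
    rcases hV v with rfl | rfl <;> simp [hab.ne']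
  · intro i
    fin_cases i <;> simp [hab.ne']
  · intro u v
    rcases hV u with rfl | rfl <;> rcases hV v with rfl | rfl <;>
      simp [hab.ne', hab, hab.symm]

end Critical

/-- For any abelian group `A` with `|A| ≥ 6`, every `A`-flow-critical graph is isomorphic
to `K₂`. -/
theorem flow_critical_big_group (A : Type) [AddCommGroup A] [Fintype A]
    (hA : 6 ≤ Fintype.card A)
    (V : Type) [Fintype V] [DecidableEq V] (G : SimpleGraph V)
    (hcrit : FlowCritical G (fun _ => (0 : A))) :
    Nonempty (G ≃g (⊤ : SimpleGraph (Fin 2))) := by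
  obtain ⟨-, hG, hno, -⟩ := id hcrit
  by_cases hcut : ∀ S : Set V, S.Nonempty → S ≠ Set.univ → 3 ≤ (cutPairs G S).card
  · obtain ⟨f, hf, hf0⟩ := exists_nz_flow hA hG hcut
    exact (hno (hf.hasNZFlow hf0)).elim
  push Not at hcut
  obtain ⟨S, ⟨x, hx⟩, hSu, hS⟩ := hcut
  obtain ⟨y, hy⟩ := (Set.ne_univ_iff_exists_notMem S).1 hSu
  obtain ⟨a, b, hab, ha, hb⟩ := exists_boundary_adj (hG.preconnected x y) hx hy
  have habS : (a, b) ∈ cutPairs G S := mem_cutPairs.2 ⟨ha, hb, hab⟩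
  have hcutsum : ∀ f : V → V → A, IsFlowOn G (fun _ => 0) f →
      f a b + ∑ p ∈ (cutPairs G S).erase (a, b), f p.1 p.2 = 0 := by
    intro f hf
    have := hf.cut S
    rw [Finset.sum_const_zero] at this
    rw [Finset.add_sum_erase (cutPairs G S) (fun p => f p.1 p.2) habS]
    exact this
  have hcard := Finset.card_erase_of_mem habS
  have hpos := Finset.card_pos.2 ⟨_, habS⟩
  by_cases h2 : ((cutPairs G S).erase (a, b)).card = 0
  · rw [Finset.card_eq_zero] at h2
    -- The edge `ab` is a bridge, on which every flow vanishes; so there is no other edge to contract.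
    refine nonempty_iso_of_unique_edge hG hab fun u v huv => ?_
    obtain ⟨f, hf, hf0⟩ := hcrit.exists_flow huv
    have := hcutsum f hf
    rw [h2, Finset.sum_empty, add_zero] at this
    rcases hf0 a b hab this with ⟨rfl, rfl⟩ | ⟨rfl, rfl⟩
    exacts [Or.inl ⟨rfl, rfl⟩, Or.inr ⟨rfl, rfl⟩]
  · obtain ⟨p, hp⟩ := Finset.card_eq_one.1 (by omega : ((cutPairs G S).erase (a, b)).card = 1)
    have hpS : p ∈ (cutPairs G S).erase (a, b) := hp ▸ Finset.mem_singleton_self p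
    obtain ⟨hp1, hp2, hpadj⟩ := mem_cutPairs.1 (Finset.mem_of_mem_erase hpS)
    -- In a cut `{ab, p}` the values on the two edges are opposite, so the lifted flow is
    -- nonzero on the contracted edge `ab` too.
    obtain ⟨f, hf, hf0⟩ := hcrit.exists_flow hab
    have hsum := hcutsum f hf
    rw [hp, Finset.sum_singleton] at hsum
    have hfab : f a b ≠ 0 := by
      intro h0
      rw [h0, zero_add] at hsum
      rcases hf0 _ _ hpadj hsum with h | h
      · exact Finset.ne_of_mem_erase hpS (Prod.ext h.1 h.2)
      · exact hb (h.1 ▸ hp1)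
    refine (hno (hf.hasNZFlow fun u v huv h0 => ?_)).elim
    rcases hf0 u v huv h0 with ⟨rfl, rfl⟩ | ⟨rfl, rfl⟩
    · exact hfab h0
    · exact hfab (by rw [hf.1, h0, neg_zero])
end
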